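/- With a family (g_{x,σ}) as in the context, for (x, σ, C₁, y, τ, C₂) drawn from the distribution D, the probability that (C₁, C₂) ∈ S, both (x, σ) and (y, τ) are excellent, and both C₁ and C₂ lie in ℱ_{x,σ} ∩ ℱ_{y,τ}, is at least ε/4. -/

import Mathlib

/-!
The tuples for which the two cubes agree on their common plane have probability `ε`. Such a tuple
is good unless it *fails* at `x` (the pair `(x, σ)` is not excellent, or one of the cubes is outside
`ℱ_{x,σ}`) or fails at `y`; on agreeing tuples `σ` and `τ` are the values of both entries at `x` and
`y`. The sample space is symmetric in `x` and `y`, so it suffices that failures at `x`, among the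
pairs with `T(C₁)(x) = T(C₂)(x)`, have probability at most `3ε/8` (`sum_fails_le`): this leaves
`ε - 2 · 3ε/8 = ε/4`.

Fix `x`, identify the cubes through `x` with the `3`-dimensional subspaces of `F^n`, and split
according to the common value `σ` at `x`; write `μ` for the measure of `𝒞_{x,σ}` (`fails_le`).

* If `μ < ε/5`, mixing for the graph of `3`-spaces meeting in a plane (`mix_upper`) bounds the pairs
  inside `𝒞_{x,σ}` by `μ² + O(μ/q) ≤ (ε/5) μ + O(μ/q)`.
* If `μ ≥ ε/5` but `(x, σ)` is not excellent, then `μ²` is charged to the triples `(C₁, ℓ, C₂)` with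
  `T(C₁) ≠ T(C₂)` on `ℓ` (`disag_lower`). On average over `x` these have density at most `d/q` by
  Schwartz-Zippel, because two entries that differ on a line coincide at few of its points
  (`sum_disag_le`). The total contribution is `O(d/(γq))`.
* If `(x, σ)` is excellent, one of the cubes lies in `𝒟_{x,σ}`, which has measure at most `2√γ μ`, and
  mixing gives at most `4√γ μ² + O(μ/q)`. Mixing from below (`mix_lower`) and Schwartz-Zippel on planes
  show that `∑_σ μ²` is on average at most `ε + (d + 1)/q` (`sum_mu_sq_le`).

Summing over `σ` gives at most `ε/5 + 4√γ ε + O(d⁴/q) ≤ 3ε/8`, as `4√γ ≤ 0.127` and `ε ≥ 10⁷ d⁶/q`.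

The mixing estimates use no spectral theory. In a design, the number of blocks of a family through
a random point has small variance (`design_var`). This applies to `3`-spaces over lines, and to
`3`-spaces over the planes through a fixed line; the law of total variance combines the two into a
bound on the variance over planes (`plane_var`). Counting pairs through their common plane expresses
mixing as a bound on a covariance, which is at most the mean of the two variances.
-/

open MvPolynomial

/-- A cube: a 3-dimensional affine subspace of `F^n`. -/
def IsCube (F : Type) [Field F] [Fintype F] (n : ℕ) (C : AffineSubspace F (Fin n → F)) : Prop :=
  (C : Set (Fin n → F)).Nonempty ∧ Module.finrank F C.direction = 3

/-- A line: a 1-dimensional affine subspace of `F^n`. -/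
def IsLine (F : Type) [Field F] [Fintype F] (n : ℕ) (ℓ : AffineSubspace F (Fin n → F)) : Prop :=
  (ℓ : Set (Fin n → F)).Nonempty ∧ Module.finrank F ℓ.direction = 1

/-- `𝒞_x`: cubes containing the point `x`. -/
def cubesOn (F : Type) [Field F] [Fintype F] (n : ℕ) (x : Fin n → F) :
    Set (AffineSubspace F (Fin n → F)) :=
  {C | IsCube F n C ∧ x ∈ C}

/-- `𝒞_{x,y}`: cubes containing the points `x` and `y`. -/
def cubesOn2 (F : Type) [Field F] [Fintype F] (n : ℕ) (x y : Fin n → F) :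
    Set (AffineSubspace F (Fin n → F)) :=
  {C | IsCube F n C ∧ x ∈ C ∧ y ∈ C}

/-- `𝒞_{x,σ}`: cubes containing `x` on which the table `T` gives `x` the value `σ`. -/
def cubesVal (F : Type) [Field F] [Fintype F] (n : ℕ)
    (T : AffineSubspace F (Fin n → F) → (Fin n → F) → F) (x : Fin n → F) (σ : F) :
    Set (AffineSubspace F (Fin n → F)) :=
  {C | IsCube F n C ∧ x ∈ C ∧ T C x = σ}

/-- `μ_x(A)`: measure of `A` relative to all cubes containing `x`. -/
noncomputable def muX (F : Type) [Field F] [Fintype F] (n : ℕ) (x : Fin n → F)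
    (A : Set (AffineSubspace F (Fin n → F))) : ℝ :=
  (A.ncard : ℝ) / ((cubesOn F n x).ncard : ℝ)

/-- `μ_{x,y}(A)`: measure of `A` relative to all cubes containing `x` and `y`. -/
noncomputable def muXY (F : Type) [Field F] [Fintype F] (n : ℕ) (x y : Fin n → F)
    (A : Set (AffineSubspace F (Fin n → F))) : ℝ :=
  (A.ncard : ℝ) / ((cubesOn2 F n x y).ncard : ℝ)

/-- Two cubes intersecting in a plane (a 2-dimensional affine subspace). -/
def PlanePair (F : Type) [Field F] [Fintype F] (n : ℕ)
    (C₁ C₂ : AffineSubspace F (Fin n → F)) : Prop :=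
  IsCube F n C₁ ∧ IsCube F n C₂ ∧
    ((C₁ ⊓ C₂ : AffineSubspace F (Fin n → F)) : Set (Fin n → F)).Nonempty ∧
    Module.finrank F (C₁ ⊓ C₂ : AffineSubspace F (Fin n → F)).direction = 2

/-- `T(C₁)` and `T(C₂)` agree on `C₁ ∩ C₂`. -/
def Agrees (F : Type) [Field F] [Fintype F] (n : ℕ)
    (T : AffineSubspace F (Fin n → F) → (Fin n → F) → F)
    (C₁ C₂ : AffineSubspace F (Fin n → F)) : Prop :=
  ∀ z : Fin n → F, z ∈ C₁ → z ∈ C₂ → T C₁ z = T C₂ z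

/-- `ε(T)`: the acceptance probability of the cube versus cube test. -/
noncomputable def epsT (F : Type) [Field F] [Fintype F] (n : ℕ)
    (T : AffineSubspace F (Fin n → F) → (Fin n → F) → F) : ℝ :=
  (({p : AffineSubspace F (Fin n → F) × AffineSubspace F (Fin n → F) |
      PlanePair F n p.1 p.2 ∧ Agrees F n T p.1 p.2}).ncard : ℝ) /
  (({p : AffineSubspace F (Fin n → F) × AffineSubspace F (Fin n → F) |
      PlanePair F n p.1 p.2}).ncard : ℝ)

/-- A degree-`d` cubes table: each entry is the restriction to `C` of a polynomial of total
degree at most `d`. -/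
def DegTable (F : Type) [Field F] [Fintype F] (n d : ℕ)
    (T : AffineSubspace F (Fin n → F) → (Fin n → F) → F) : Prop :=
  ∀ C : AffineSubspace F (Fin n → F), IsCube F n C →
    ∃ p : MvPolynomial (Fin n) F, p.totalDegree ≤ d ∧ ∀ z ∈ C, T C z = eval z p

/-- `γ = 1/(1000 d³)`. -/
noncomputable def gam (d : ℕ) : ℝ := 1 / (1000 * (d : ℝ) ^ 3)

/-- `T(C₁)` and `T(C₂)` agree on the line `ℓ`. -/
def LineAgree (F : Type) [Field F] [Fintype F] (n : ℕ)
    (T : AffineSubspace F (Fin n → F) → (Fin n → F) → F)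
    (C₁ C₂ ℓ : AffineSubspace F (Fin n → F)) : Prop :=
  ∀ z : Fin n → F, z ∈ ℓ → T C₁ z = T C₂ z

/-- An excellent pair `(x, σ)`: (i) `μ_x(𝒞_{x,σ}) ≥ ε/5`, and (ii) picking `C₁` uniform in
`𝒞_{x,σ}`, a uniform line `ℓ` with `x ∈ ℓ ⊆ C₁`, and `C₂` uniform in `{C ∈ 𝒞_{x,σ} : ℓ ⊆ C}`,
the probability that `T(C₁)|_ℓ ≠ T(C₂)|_ℓ` is at most `γ`.  (The probability is written as the
sum over the uniformly weighted pairs `(C₁, ℓ)` of the conditional probability over `C₂`,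
compared against `γ` times the number of pairs `(C₁, ℓ)`.) -/
def Excellent (F : Type) [Field F] [Fintype F] (n : ℕ)
    (T : AffineSubspace F (Fin n → F) → (Fin n → F) → F)
    (d : ℕ) (ε : ℝ) (x : Fin n → F) (σ : F) : Prop :=
  ε / 5 ≤ muX F n x (cubesVal F n T x σ) ∧
  (∑ᶠ C₁ ∈ cubesVal F n T x σ,
      ∑ᶠ ℓ ∈ {ℓ : AffineSubspace F (Fin n → F) | IsLine F n ℓ ∧ x ∈ ℓ ∧ ℓ ≤ C₁},
        (({C₂ ∈ cubesVal F n T x σ | ℓ ≤ C₂ ∧ ¬ LineAgree F n T C₁ C₂ ℓ}.ncard : ℝ) /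
          ({C₂ ∈ cubesVal F n T x σ | ℓ ≤ C₂}.ncard : ℝ)))
    ≤ gam d * (({p : AffineSubspace F (Fin n → F) × AffineSubspace F (Fin n → F) |
        p.1 ∈ cubesVal F n T x σ ∧ IsLine F n p.2 ∧ x ∈ p.2 ∧ p.2 ≤ p.1}).ncard : ℝ)

/-- `ℱ_{x,σ}`: the cubes of `𝒞_{x,σ}` on which `T` coincides with the global polynomial
`g x σ`. -/
def calF (F : Type) [Field F] [Fintype F] (n : ℕ)
    (T : AffineSubspace F (Fin n → F) → (Fin n → F) → F)
    (g : (Fin n → F) → F → MvPolynomial (Fin n) F) (x : Fin n → F) (σ : F) :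
    Set (AffineSubspace F (Fin n → F)) :=
  {C ∈ cubesVal F n T x σ | ∀ z : Fin n → F, z ∈ C → T C z = eval z (g x σ)}

/-- The sample space of the distribution `D`: tuples `((C₁, C₂), (x, y))` where `C₁, C₂` are
cubes meeting in a plane and `x ≠ y` are points of the plane `C₁ ∩ C₂`.  The distribution `D`
is uniform on this set, with `σ = T(C₁)(x)` and `τ = T(C₂)(y)` determined. -/
def OmegaD (F : Type) [Field F] [Fintype F] (n : ℕ) :
    Set ((AffineSubspace F (Fin n → F) × AffineSubspace F (Fin n → F)) ×
      (Fin n → F) × (Fin n → F)) :=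
  {ω | PlanePair F n ω.1.1 ω.1.2 ∧ ω.2.1 ∈ ω.1.1 ∧ ω.2.1 ∈ ω.1.2 ∧
    ω.2.2 ∈ ω.1.1 ∧ ω.2.2 ∈ ω.1.2 ∧ ω.2.1 ≠ ω.2.2}

/-! ### Second moments in designs -/

/-- In a design with incidence matrix `ι` (every point lies in `r` blocks, two distinct points lie
in `s` common blocks, every block has `k` points), the number of blocks of a family `A` through
a point has small variance: the bound is the second singular value of the incidence matrix. -/
lemma design_var {α β : Type*} (Pts : Finset α) (Blk A : Finset β) (hA : A ⊆ Blk)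
    (ι : α → β → ℝ) (r s k c : ℝ) (hr : 0 ≤ r) (hs : 0 ≤ s)
    (h1 : ∀ p ∈ Pts, ∑ B ∈ Blk, ι p B * ι p B = r)
    (h2 : ∀ p ∈ Pts, ∀ p' ∈ Pts, p ≠ p' → ∑ B ∈ Blk, ι p B * ι p' B = s)
    (h3 : ∀ B ∈ Blk, ∑ p ∈ Pts, ι p B = k)
    (hc : (Pts.card : ℝ) * c = k * A.card) :
    ∑ p ∈ Pts, (∑ B ∈ A, ι p B - c) ^ 2 ≤ r * A.card := by
  classical
  set h : α → ℝ := fun p => ∑ B ∈ A, ι p B - c with hh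
  set S := ∑ p ∈ Pts, h p ^ 2 with hS
  have hsum : ∑ p ∈ Pts, h p = 0 := by
    simp only [hh, Finset.sum_sub_distrib, Finset.sum_const, nsmul_eq_mul]
    rw [Finset.sum_comm, Finset.sum_congr rfl (fun B hB => h3 B (hA hB)), hc]
    simp; ring
  set H : β → ℝ := fun B => ∑ p ∈ Pts, h p * ι p B with hH
  have hSH : S = ∑ B ∈ A, H B := by
    simp only [hH]
    rw [Finset.sum_comm]
    have : ∀ p ∈ Pts, h p ^ 2 = ∑ B ∈ A, h p * ι p B - c * h p := by
      intro p _
      rw [← Finset.mul_sum]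
      have : ∑ B ∈ A, ι p B = h p + c := by simp [hh]
      rw [this]; ring
    rw [hS, Finset.sum_congr rfl this, Finset.sum_sub_distrib, ← Finset.mul_sum, hsum]
    simp
  have hH2 : ∑ B ∈ Blk, H B ^ 2 = (r - s) * S := by
    have e1 : ∑ B ∈ Blk, H B ^ 2 =
        ∑ p ∈ Pts, ∑ p' ∈ Pts, h p * h p' * ∑ B ∈ Blk, ι p B * ι p' B := by
      have e0 : ∀ B ∈ Blk, H B ^ 2 =
          ∑ p ∈ Pts, ∑ p' ∈ Pts, h p * h p' * (ι p B * ι p' B) := by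
        intro B _
        rw [sq, hH, Finset.sum_mul_sum]
        exact Finset.sum_congr rfl fun p _ => Finset.sum_congr rfl fun p' _ => by ring
      rw [Finset.sum_congr rfl e0, Finset.sum_comm]
      refine Finset.sum_congr rfl fun p _ => ?_
      rw [Finset.sum_comm]
      exact Finset.sum_congr rfl fun p' _ => (Finset.mul_sum _ _ _).symm
    have e2 : ∀ p ∈ Pts, ∑ p' ∈ Pts, h p * h p' * ∑ B ∈ Blk, ι p B * ι p' B
        = (r - s) * h p ^ 2 := by
      intro p hp
      have : ∀ p' ∈ Pts, h p * h p' * ∑ B ∈ Blk, ι p B * ι p' B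
          = s * h p * h p' + if p = p' then (r - s) * h p ^ 2 else 0 := by
        intro p' hp'
        split_ifs with hpp
        · subst hpp; rw [h1 p hp]; ring
        · rw [h2 p hp p' hp' hpp]; ring
      rw [Finset.sum_congr rfl this, Finset.sum_add_distrib, ← Finset.mul_sum, hsum]
      simp [hp]
    rw [e1, Finset.sum_congr rfl e2, ← Finset.mul_sum]
  have hS0 : 0 ≤ S := Finset.sum_nonneg fun p _ => sq_nonneg _
  have hCS : S ^ 2 ≤ A.card * ((r - s) * S) := by
    rw [← hH2]
    calc S ^ 2 = (∑ B ∈ A, H B) ^ 2 := by rw [hSH]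
      _ ≤ A.card * ∑ B ∈ A, H B ^ 2 := sq_sum_le_card_mul_sum_sq
      _ ≤ A.card * ∑ B ∈ Blk, H B ^ 2 := by
        gcongr
  have hAs : 0 ≤ (A.card : ℝ) * s * S := by positivity
  rcases hS0.eq_or_lt with h0 | h0
  · rw [← h0]; positivity
  · nlinarith

/-! ### Counting subspaces -/

section Grassmann

open Module

set_option linter.unusedSectionVars false

variable {F V : Type} [Field F] [Fintype F] [AddCommGroup V] [Module F V] [Fintype V]

noncomputable local instance : Fintype (Submodule F V) := Fintype.ofFinite _

open scoped Classical in
/-- The `j`-dimensional linear subspaces of `V`. -/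
noncomputable def gr (F V : Type) [Field F] [AddCommGroup V] [Module F V] [Fintype V] (j : ℕ) :
    Finset (Submodule F V) :=
  letI : Fintype (Submodule F V) := Fintype.ofFinite _
  Finset.univ.filter fun W => finrank F W = j

lemma mem_gr {j : ℕ} {W : Submodule F V} : W ∈ gr F V j ↔ finrank F W = j := by
  simp [gr]

open scoped Classical in
/-- The inclusion indicator of two subspaces. -/
noncomputable def ind (U W : Submodule F V) : ℝ := if U ≤ W then 1 else 0

lemma ind_of_le {U W : Submodule F V} (h : U ≤ W) : ind U W = 1 := by simp [ind, h]
lemma ind_nonneg (U W : Submodule F V) : 0 ≤ ind U W := by unfold ind; split_ifs <;> simp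
lemma ind_mul_self (U W : Submodule F V) : ind U W * ind U W = ind U W := by
  unfold ind; split_ifs <;> simp

lemma ind_mul_ind (U U' W : Submodule F V) : ind U W * ind U' W = ind (U ⊔ U') W := by
  unfold ind
  by_cases h : U ≤ W <;> by_cases h' : U' ≤ W <;> simp [h, h']

open scoped Classical in
lemma card_filter_mem (W : Submodule F V) :
    (Finset.univ.filter fun v : V => v ∈ W).card = Fintype.card F ^ finrank F W := by
  rw [← Module.card_eq_pow_finrank, Fintype.card_subtype]

/-- Number of `(j+1)`-dimensional spaces between a `j`-dimensional `U` and `W`, obtained by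
counting the vectors of `W` outside `U` according to the space they span with `U`. -/
lemma cover_count {j : ℕ} {U W : Submodule F V} (hUW : U ≤ W) (hU : finrank F U = j) :
    (∑ P ∈ gr F V (j + 1), ind U P * ind P W) *
      ((Fintype.card F : ℝ) ^ (j + 1) - (Fintype.card F : ℝ) ^ j)
      = (Fintype.card F : ℝ) ^ finrank F W - (Fintype.card F : ℝ) ^ j := by
  classical
  have : Module.Finite F V := Module.Finite.of_finite
  have hdiff : ∀ W' : Submodule F V, U ≤ W' →
      ((Finset.univ.filter fun v : V => v ∈ W' ∧ v ∉ U).card : ℝ)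
        = (Fintype.card F : ℝ) ^ finrank F W' - (Fintype.card F : ℝ) ^ j := by
    intro W' h
    have e : (Finset.univ.filter fun v : V => v ∈ W' ∧ v ∉ U)
        = (Finset.univ.filter fun v : V => v ∈ W') \ (Finset.univ.filter fun v : V => v ∈ U) := by
      ext v; simp
    rw [e, Finset.card_sdiff_of_subset (by intro v; simpa using fun hv => h hv),
      Nat.cast_sub (Finset.card_le_card (by intro v; simpa using fun hv => h hv)),
      card_filter_mem, card_filter_mem, hU]
    push_cast; rfl
  rw [← hdiff W hUW]
  have hmap : ∀ v ∈ (Finset.univ.filter fun v : V => v ∈ W ∧ v ∉ U),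
      U ⊔ Submodule.span F {v} ∈ (gr F V (j + 1)).filter fun P => U ≤ P ∧ P ≤ W := by
    intro v hv
    simp only [Finset.mem_filter, Finset.mem_univ, true_and] at hv
    simp only [Finset.mem_filter, mem_gr]
    refine ⟨?_, le_sup_left, sup_le hUW (by simpa using hv.1)⟩
    rw [Submodule.finrank_sup_span_singleton hv.2, hU]
  rw [Finset.card_eq_sum_card_fiberwise hmap]
  have e : ∑ P ∈ gr F V (j + 1), ind U P * ind P W
      = ∑ P ∈ (gr F V (j + 1)).filter (fun P => U ≤ P ∧ P ≤ W), (1 : ℝ) := by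
    rw [Finset.sum_filter]
    refine Finset.sum_congr rfl fun P _ => ?_
    unfold ind
    by_cases h : U ≤ P <;> by_cases h' : P ≤ W <;> simp [h, h']
  rw [e, Finset.sum_mul]
  push_cast
  refine Finset.sum_congr rfl fun P hP => ?_
  simp only [Finset.mem_filter, mem_gr] at hP
  obtain ⟨hP1, hP2, hP3⟩ := hP
  rw [one_mul, ← hP1, ← hdiff P hP2]
  congr 2
  ext v
  simp only [Finset.mem_filter, Finset.mem_univ, true_and]
  constructor
  · rintro ⟨hv, hvU⟩
    refine ⟨⟨hP3 hv, hvU⟩, ?_⟩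
    refine Submodule.eq_of_le_of_finrank_eq (sup_le hP2 (by simpa using hv)) ?_
    rw [Submodule.finrank_sup_span_singleton hvU, hU, hP1]
  · rintro ⟨⟨hv, hvU⟩, rfl⟩
    exact ⟨(le_sup_right : _ ≤ U ⊔ _) (Submodule.mem_span_singleton_self v), hvU⟩

/-- The incidence numbers of the lines, planes and `3`-spaces of `V`, where `Q` is the size of the
field: `v`, `p₂`, `b` are the numbers of lines, planes and `3`-spaces; `w` is the number of planes
through a line, `r` the number of `3`-spaces through a line and `s` the number of `3`-spaces
through a plane. -/
structure GrCounts (F V : Type) [Field F] [AddCommGroup V] [Module F V] [Fintype V]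
    (Q v w s r b p₂ : ℝ) : Prop where
  hQ : 2 ≤ Q
  v_pos : 0 < v
  w_pos : 0 < w
  s_ge : Q + 1 ≤ s
  r_pos : 0 < r
  b_pos : 0 < b
  p_pos : 0 < p₂
  hv : ((gr F V 1).card : ℝ) = v
  hp : ((gr F V 2).card : ℝ) = p₂
  hb : ((gr F V 3).card : ℝ) = b
  hs : ∀ P ∈ gr F V 2, ∑ W ∈ gr F V 3, ind P W = s
  hr : ∀ L ∈ gr F V 1, ∑ W ∈ gr F V 3, ind L W = r
  hw : ∀ L ∈ gr F V 1, ∑ P ∈ gr F V 2, ind L P = w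
  hk1 : ∀ W ∈ gr F V 3, ∑ L ∈ gr F V 1, ind L W = Q ^ 2 + Q + 1
  hk2 : ∀ L ∈ gr F V 1, ∀ W ∈ gr F V 3, ∑ P ∈ gr F V 2, ind L P * ind P W = (Q + 1) * ind L W
  hk3 : ∀ P ∈ gr F V 2, ∑ L ∈ gr F V 1, ind L P = Q + 1
  hk4 : ∀ W ∈ gr F V 3, ∑ P ∈ gr F V 2, ind P W = Q ^ 2 + Q + 1
  bk : b * (Q ^ 2 + Q + 1) = v * r
  pk : p₂ * (Q + 1) = v * w
  ws : w * s = r * (Q + 1)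

/-- The incidence numbers exist once `4 ≤ dim V`; they are all obtained from `cover_count`. -/
lemma exists_grCounts (hn : 4 ≤ finrank F V) :
    ∃ v w s r b p₂ : ℝ, GrCounts F V (Fintype.card F : ℝ) v w s r b p₂ := by
  classical
  have : Module.Finite F V := Module.Finite.of_finite
  set Q : ℝ := (Fintype.card F : ℝ) with hQdef
  have hQ : 2 ≤ Q := by
    have := Fintype.one_lt_card (α := F)
    rw [hQdef]; exact_mod_cast this
  set N := finrank F V
  have hN : Q ^ 4 ≤ Q ^ N := pow_le_pow_right₀ (by linarith) hn
  have d0 : 0 < Q - 1 := by linarith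
  have d1 : 0 < Q ^ 2 - Q := by nlinarith
  have d2 : 0 < Q ^ 3 - Q ^ 2 := by nlinarith [mul_pos (show 0 < Q by linarith) d1]
  have d3 : 0 < Q ^ 4 - Q ^ 3 := by
    have : Q ^ 4 - Q ^ 3 = Q * (Q ^ 3 - Q ^ 2) := by ring
    rw [this]; exact mul_pos (by linarith) d2
  have top : ∀ W : Submodule F V, ind W ⊤ = 1 := fun W => ind_of_le le_top
  have bot : ∀ W : Submodule F V, ind ⊥ W = 1 := fun W => ind_of_le bot_le
  have hv : ((gr F V 1).card : ℝ) = (Q ^ N - 1) / (Q - 1) := by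
    have := cover_count (F := F) (V := V) (U := ⊥) (W := ⊤) bot_le (finrank_bot F V)
    simp only [top, bot, mul_one, Finset.sum_const, nsmul_eq_mul, zero_add, pow_one, pow_zero,
      finrank_top] at this
    rw [eq_div_iff d0.ne']; exact this
  have hw : ∀ L ∈ gr F V 1, ∑ P ∈ gr F V 2, ind L P = (Q ^ N - Q) / (Q ^ 2 - Q) := by
    intro L hL
    have := cover_count (F := F) (V := V) (U := L) (W := ⊤) le_top (mem_gr.1 hL)
    simp only [top, mul_one, pow_one, finrank_top] at this
    rw [eq_div_iff d1.ne']; exact this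
  have hs : ∀ P ∈ gr F V 2, ∑ W ∈ gr F V 3, ind P W = (Q ^ N - Q ^ 2) / (Q ^ 3 - Q ^ 2) := by
    intro L hL
    have := cover_count (F := F) (V := V) (U := L) (W := ⊤) le_top (mem_gr.1 hL)
    simp only [top, mul_one, finrank_top] at this
    rw [eq_div_iff d2.ne']; exact this
  have hk1 : ∀ W ∈ gr F V 3, ∑ L ∈ gr F V 1, ind L W = Q ^ 2 + Q + 1 := by
    intro W hW
    have := cover_count (F := F) (V := V) (U := ⊥) (W := W) bot_le (finrank_bot F V)
    simp only [bot, one_mul, zero_add, pow_one, pow_zero, mem_gr.1 hW] at this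
    refine mul_right_cancel₀ d0.ne' (this.trans ?_); ring
  have hk3 : ∀ P ∈ gr F V 2, ∑ L ∈ gr F V 1, ind L P = Q + 1 := by
    intro W hW
    have := cover_count (F := F) (V := V) (U := ⊥) (W := W) bot_le (finrank_bot F V)
    simp only [bot, one_mul, zero_add, pow_one, pow_zero, mem_gr.1 hW] at this
    refine mul_right_cancel₀ d0.ne' (this.trans ?_); ring
  have hk2 : ∀ L ∈ gr F V 1, ∀ W ∈ gr F V 3,
      ∑ P ∈ gr F V 2, ind L P * ind P W = (Q + 1) * ind L W := by
    intro L hL W hW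
    by_cases h : L ≤ W
    · have := cover_count (F := F) (V := V) h (mem_gr.1 hL)
      simp only [pow_one, mem_gr.1 hW] at this
      rw [ind_of_le h]
      refine mul_right_cancel₀ d1.ne' (this.trans ?_); ring
    · rw [show ind L W = 0 by simp [ind, h], mul_zero]
      refine Finset.sum_eq_zero fun P _ => ?_
      unfold ind
      by_cases h1 : L ≤ P
      · have : ¬ P ≤ W := fun h2 => h (h1.trans h2)
        simp [this]
      · simp [h1]
  set v := (Q ^ N - 1) / (Q - 1)
  set w := (Q ^ N - Q) / (Q ^ 2 - Q)
  set s := (Q ^ N - Q ^ 2) / (Q ^ 3 - Q ^ 2)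
  have v_pos : 0 < v := div_pos (by nlinarith) d0
  have w_pos : 0 < w := div_pos (by nlinarith) d1
  have s_ge : Q + 1 ≤ s := by
    rw [le_div_iff₀ d2]; nlinarith
  have k1 : 0 < Q ^ 2 + Q + 1 := by positivity
  have k2 : 0 < Q + 1 := by linarith
  have hr : ∀ L ∈ gr F V 1, ∑ W ∈ gr F V 3, ind L W = w * s / (Q + 1) := by
    intro L hL
    rw [eq_div_iff k2.ne', Finset.sum_mul, ← hw L hL, Finset.sum_mul]
    calc ∑ W ∈ gr F V 3, ind L W * (Q + 1)
        = ∑ W ∈ gr F V 3, ∑ P ∈ gr F V 2, ind L P * ind P W :=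
          Finset.sum_congr rfl fun W hW => by rw [hk2 L hL W hW]; ring
      _ = ∑ P ∈ gr F V 2, ind L P * s := by
          rw [Finset.sum_comm]
          exact Finset.sum_congr rfl fun P hP => by rw [← Finset.mul_sum, hs P hP]
  have hk4 : ∀ W ∈ gr F V 3, ∑ P ∈ gr F V 2, ind P W = Q ^ 2 + Q + 1 := by
    intro W hW
    refine mul_right_cancel₀ k2.ne' ?_
    rw [← hk1 W hW, Finset.sum_mul, Finset.sum_mul]
    calc ∑ P ∈ gr F V 2, ind P W * (Q + 1)
        = ∑ P ∈ gr F V 2, ∑ L ∈ gr F V 1, ind L P * ind P W :=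
          Finset.sum_congr rfl fun P hP => by rw [← Finset.sum_mul, hk3 P hP]; ring
      _ = ∑ L ∈ gr F V 1, ind L W * (Q + 1) := by
          rw [Finset.sum_comm]
          exact Finset.sum_congr rfl fun L hL => by rw [hk2 L hL W hW]; ring
  have hb : ((gr F V 3).card : ℝ) * (Q ^ 2 + Q + 1) = v * (w * s / (Q + 1)) := by
    rw [← hv, ← nsmul_eq_mul, ← nsmul_eq_mul, ← Finset.sum_const, ← Finset.sum_const,
      ← Finset.sum_congr rfl hk1, Finset.sum_comm, Finset.sum_congr rfl hr]
  have hp : ((gr F V 2).card : ℝ) * (Q + 1) = v * w := by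
    rw [← hv, ← nsmul_eq_mul, ← nsmul_eq_mul, ← Finset.sum_const, ← Finset.sum_const,
      ← Finset.sum_congr rfl hk3, Finset.sum_comm, Finset.sum_congr rfl hw]
  have s_pos : 0 < s := by linarith
  have r_pos : 0 < w * s / (Q + 1) := by positivity
  refine ⟨v, w, s, w * s / (Q + 1), (gr F V 3).card, (gr F V 2).card, ?_⟩
  exact
    { hQ := hQ, v_pos := v_pos, w_pos := w_pos, s_ge := s_ge, r_pos := r_pos
      b_pos := pos_of_mul_pos_left (by rw [hb]; positivity) k1.le
      p_pos := pos_of_mul_pos_left (by rw [hp]; positivity) k2.le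
      hv := hv, hp := rfl, hb := rfl, hs := hs, hr := hr, hw := hw, hk1 := hk1, hk2 := hk2
      hk3 := hk3, hk4 := hk4, bk := hb, pk := hp
      ws := by field_simp }

lemma sup_mem_gr {j : ℕ} {U U' W : Submodule F V} (hU : finrank F U = j + 1)
    (hU' : finrank F U' = j + 1) (hW : finrank F W = j) (h1 : W ≤ U) (h2 : W ≤ U')
    (hne : U ≠ U') : finrank F (U ⊔ U' : Submodule F V) = j + 2 := by
  have : Module.Finite F V := Module.Finite.of_finite
  have h := Submodule.finrank_sup_add_finrank_inf_eq U U'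
  have hle : j ≤ finrank F (U ⊓ U' : Submodule F V) :=
    hW ▸ Submodule.finrank_mono (le_inf h1 h2)
  have hlt : finrank F (U ⊓ U' : Submodule F V) < j + 1 := by
    by_contra hcon
    have e1 : U ⊓ U' = U := Submodule.eq_of_le_of_finrank_le inf_le_left (by omega)
    have e2 : U ⊓ U' = U' := Submodule.eq_of_le_of_finrank_le inf_le_right (by omega)
    exact hne (e1.symm.trans e2)
  omega

/-- The number of `3`-spaces of the family `X` that contain `U`. -/
noncomputable def above (X : Finset (Submodule F V)) (U : Submodule F V) : ℝ := ∑ W ∈ X, ind U W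

section Mixing

variable {Q v w s r b p₂ : ℝ} (G : GrCounts F V Q v w s r b p₂)
include G

/-- Variance of the number of members of `X` through a line. -/
lemma line_var {X : Finset (Submodule F V)} (hX : X ⊆ gr F V 3) :
    ∑ L ∈ gr F V 1, (above X L - r * X.card / b) ^ 2 ≤ r * X.card := by
  have hs0 : 0 ≤ s := by linarith [G.s_ge, G.hQ]
  refine design_var _ (gr F V 3) X hX ind r s (Q ^ 2 + Q + 1) _ G.r_pos.le hs0 ?_ ?_ G.hk1 ?_
  · intro L hL
    simp only [ind_mul_self]
    exact G.hr L hL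
  · intro L hL L' hL' hne
    simp only [ind_mul_ind]
    refine G.hs _ (mem_gr.2 ?_)
    exact sup_mem_gr (mem_gr.1 hL) (mem_gr.1 hL') (finrank_bot F V) bot_le bot_le hne
  · rw [G.hv]
    have := G.bk
    have := G.b_pos
    field_simp
    linear_combination (-(X.card : ℝ)) * G.bk

/-- Variance, over the planes containing a fixed line, of the number of members of `X`
through a plane. -/
lemma local_var {X : Finset (Submodule F V)} (hX : X ⊆ gr F V 3) {L : Submodule F V}
    (hL : L ∈ gr F V 1) :
    ∑ P ∈ gr F V 2, ind L P * (above X P - s / r * above X L) ^ 2 ≤ s * above X L := by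
  classical
  have hs0 : 0 ≤ s := by linarith [G.s_ge, G.hQ]
  have hcard : (((X.filter fun W => L ≤ W).card : ℕ) : ℝ) = above X L := by
    simp [above, ind]
  have hpts : ((((gr F V 2).filter fun P => L ≤ P).card : ℕ) : ℝ) = w := by
    rw [← G.hw L hL]; simp [ind]
  have key := design_var ((gr F V 2).filter fun P => L ≤ P) ((gr F V 3).filter fun W => L ≤ W)
    (X.filter fun W => L ≤ W) (Finset.filter_subset_filter _ hX) ind s 1 (Q + 1)
    (s / r * above X L) hs0 zero_le_one ?_ ?_ ?_ ?_
  · rw [hcard, Finset.sum_filter] at key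
    refine le_trans (le_of_eq ?_) key
    refine Finset.sum_congr rfl fun P _ => ?_
    split_ifs with h
    · rw [ind_of_le h, one_mul]
      congr 2
      rw [above, Finset.sum_filter]
      refine Finset.sum_congr rfl fun W _ => ?_
      unfold ind
      by_cases h2 : P ≤ W
      · simp [h.trans h2]
      · simp [h2]
    · simp [ind, h]
  · intro P hP
    simp only [Finset.mem_filter] at hP
    simp only [ind_mul_self]
    rw [← G.hs P hP.1, Finset.sum_filter]
    refine Finset.sum_congr rfl fun W _ => ?_
    unfold ind
    by_cases h2 : P ≤ W
    · simp [hP.2.trans h2]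
    · simp [h2]
  · intro P hP P' hP' hne
    simp only [Finset.mem_filter] at hP hP'
    have h3 := sup_mem_gr (mem_gr.1 hP.1) (mem_gr.1 hP'.1) (mem_gr.1 hL) hP.2 hP'.2 hne
    simp only [ind_mul_ind]
    rw [Finset.sum_eq_single (P ⊔ P')]
    · exact ind_of_le le_rfl
    · intro W hW hWne
      simp only [Finset.mem_filter] at hW
      unfold ind
      rw [if_neg]
      intro hle
      have : Module.Finite F V := Module.Finite.of_finite
      exact hWne (Submodule.eq_of_le_of_finrank_eq hle (by rw [h3, mem_gr.1 hW.1])).symm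
    · intro hn
      exact absurd (Finset.mem_filter.2 ⟨mem_gr.2 h3, hP.2.trans le_sup_left⟩) hn
  · intro W hW
    simp only [Finset.mem_filter] at hW
    have := G.hk2 L hL W hW.1
    rw [ind_of_le hW.2, mul_one] at this
    rw [← this, Finset.sum_filter]
    refine Finset.sum_congr rfl fun P _ => ?_
    unfold ind
    by_cases h2 : L ≤ P <;> simp [h2]
  · rw [hpts, hcard]
    have := G.r_pos
    field_simp
    linear_combination above X L * G.ws

lemma sum_above_line {X : Finset (Submodule F V)} (hX : X ⊆ gr F V 3) :
    ∑ L ∈ gr F V 1, above X L = (Q ^ 2 + Q + 1) * X.card := by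
  unfold above
  rw [Finset.sum_comm, Finset.sum_congr rfl fun W hW => G.hk1 W (hX hW)]
  simp; ring

lemma sum_above_plane {X : Finset (Submodule F V)} (hX : X ⊆ gr F V 3) :
    ∑ P ∈ gr F V 2, above X P = (Q ^ 2 + Q + 1) * X.card := by
  unfold above
  rw [Finset.sum_comm, Finset.sum_congr rfl fun W hW => G.hk4 W (hX hW)]
  simp; ring

lemma sum_above_plane_local {X : Finset (Submodule F V)} (hX : X ⊆ gr F V 3)
    {L : Submodule F V} (hL : L ∈ gr F V 1) :
    ∑ P ∈ gr F V 2, ind L P * above X P = (Q + 1) * above X L := by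
  unfold above
  simp only [Finset.mul_sum]
  rw [Finset.sum_comm]
  exact Finset.sum_congr rfl fun W hW => G.hk2 L hL W (hX hW)

/-- Variance of the number of members of `X` through a plane, obtained from the law of total
variance for a random line in the plane. -/
lemma plane_var {X : Finset (Submodule F V)} (hX : X ⊆ gr F V 3) :
    (∑ P ∈ gr F V 2, (above X P - s * X.card / b) ^ 2) * (Q + 1)
      ≤ s * X.card * (Q ^ 2 + 2 * Q + 2) := by
  have hr := G.r_pos
  have hb := G.b_pos
  set c := s * X.card / b with hc
  have e1 : (∑ P ∈ gr F V 2, (above X P - c) ^ 2) * (Q + 1)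
      = ∑ L ∈ gr F V 1, ∑ P ∈ gr F V 2, ind L P * (above X P - c) ^ 2 := by
    rw [Finset.sum_comm, Finset.sum_mul]
    exact Finset.sum_congr rfl fun P hP => by rw [← Finset.sum_mul, G.hk3 P hP]; ring
  have e2 : ∀ L ∈ gr F V 1, ∑ P ∈ gr F V 2, ind L P * (above X P - c) ^ 2
      ≤ s * above X L + w * (s / r) ^ 2 * (above X L - r * X.card / b) ^ 2 := by
    intro L hL
    have h1 := local_var G hX hL
    set m := s / r * above X L with hm
    have h2 : ∑ P ∈ gr F V 2, ind L P * (above X P - c) ^ 2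
        = ∑ P ∈ gr F V 2, ind L P * (above X P - m) ^ 2
          + 2 * (m - c) * (∑ P ∈ gr F V 2, ind L P * above X P - m * ∑ P ∈ gr F V 2, ind L P)
          + (m - c) ^ 2 * ∑ P ∈ gr F V 2, ind L P := by
      simp only [mul_sub, Finset.mul_sum]
      rw [← Finset.sum_sub_distrib, ← Finset.sum_add_distrib, ← Finset.sum_add_distrib]
      exact Finset.sum_congr rfl fun P _ => by ring
    have h3 : (Q + 1) * above X L - m * w = 0 := by
      rw [hm]; field_simp; linear_combination (-above X L) * G.ws
    rw [h2, sum_above_plane_local G hX hL, G.hw L hL, h3]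
    have h4 : (m - c) ^ 2 * w = w * (s / r) ^ 2 * (above X L - r * X.card / b) ^ 2 := by
      rw [hm, hc]; field_simp
    rw [h4]; linarith
  rw [e1]
  refine (Finset.sum_le_sum e2).trans ?_
  rw [Finset.sum_add_distrib, ← Finset.mul_sum, ← Finset.mul_sum, sum_above_line G hX]
  have h5 := mul_le_mul_of_nonneg_left (line_var G hX)
    (show 0 ≤ w * (s / r) ^ 2 by have := G.w_pos; positivity)
  have h6 : w * (s / r) ^ 2 * (r * X.card) = s * X.card * (Q + 1) := by
    field_simp; linear_combination (s * X.card) * G.ws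
  rw [h6] at h5
  linarith

end Mixing

/-! ### Mixing for pairs meeting in a plane -/

open scoped Classical in
/-- The number of pairs in `X × Y` meeting in a plane. -/
noncomputable def pairs (X Y : Finset (Submodule F V)) : ℝ :=
  (((X ×ˢ Y).filter fun W => finrank F (W.1 ⊓ W.2 : Submodule F V) = 2).card : ℝ)

lemma pairs_comm (X Y : Finset (Submodule F V)) : pairs X Y = pairs Y X := by
  classical
  unfold pairs
  congr 1
  refine Finset.card_bij (fun W _ => W.swap) ?_ ?_ ?_
  · intro W hW
    simp only [Finset.mem_filter, Finset.mem_product] at hW ⊢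
    exact ⟨⟨hW.1.2, hW.1.1⟩, by rw [inf_comm]; exact hW.2⟩
  · intro W _ W' _ h
    exact Prod.swap_injective h
  · intro W hW
    simp only [Finset.mem_filter, Finset.mem_product] at hW
    refine ⟨W.swap, ?_, by simp⟩
    simp only [Finset.mem_filter, Finset.mem_product]
    exact ⟨⟨hW.1.2, hW.1.1⟩, by rw [inf_comm]; exact hW.2⟩

lemma pairs_mono {X X' Y Y' : Finset (Submodule F V)} (h : X ⊆ X') (h' : Y ⊆ Y') :
    pairs X Y ≤ pairs X' Y' := by
  classical
  unfold pairs
  exact_mod_cast Finset.card_le_card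
    (Finset.filter_subset_filter _ (Finset.product_subset_product h h'))

section Mixing2

variable {Q v w s r b p₂ : ℝ} (G : GrCounts F V Q v w s r b p₂)
include G

open scoped Classical in
/-- The second moment of the number of members through a plane counts the pairs meeting in that
plane, up to the diagonal, since distinct `3`-spaces share at most one plane. -/
lemma sum_above_mul {X Y : Finset (Submodule F V)} (hX : X ⊆ gr F V 3) (hY : Y ⊆ gr F V 3) :
    ∑ P ∈ gr F V 2, above X P * above Y P
      = pairs X Y + (Q ^ 2 + Q + 1) * (X ∩ Y).card := by
  have : Module.Finite F V := Module.Finite.of_finite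
  have key : ∀ W ∈ X, ∀ W' ∈ Y, ∑ P ∈ gr F V 2, ind P W * ind P W'
      = (if finrank F (W ⊓ W' : Submodule F V) = 2 then 1 else 0)
        + (Q ^ 2 + Q + 1) * (if W = W' then 1 else 0) := by
    intro W hW W' hW'
    by_cases h : W = W'
    · subst h
      have h3 := mem_gr.1 (hX hW)
      have h4 : finrank F (W ⊓ W : Submodule F V) ≠ 2 := by rw [inf_idem, h3]; decide
      simp only [ind_mul_self, G.hk4 W (hX hW), if_neg h4, if_true]; ring
    · have e : ∀ P : Submodule F V, ind P W * ind P W' = ind P (W ⊓ W') := by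
        intro P; unfold ind
        by_cases h1 : P ≤ W <;> by_cases h2 : P ≤ W' <;> simp [h1, h2]
      simp only [e, h, if_false, mul_zero, add_zero]
      have hlt : finrank F (W ⊓ W' : Submodule F V) ≤ 2 := by
        by_contra hcon
        have e1 : W ⊓ W' = W := Submodule.eq_of_le_of_finrank_le inf_le_left
          (by rw [mem_gr.1 (hX hW)]; omega)
        have e2 : W ⊓ W' = W' := Submodule.eq_of_le_of_finrank_le inf_le_right
          (by rw [mem_gr.1 (hY hW')]; omega)
        exact h (e1.symm.trans e2)
      split_ifs with h2
      · rw [Finset.sum_eq_single (W ⊓ W')]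
        · exact ind_of_le le_rfl
        · intro P hP hne
          unfold ind
          rw [if_neg]
          intro hle
          exact hne (Submodule.eq_of_le_of_finrank_eq hle (by rw [h2, mem_gr.1 hP]))
        · intro hn; exact absurd (mem_gr.2 h2) hn
      · refine Finset.sum_eq_zero fun P hP => ?_
        unfold ind
        rw [if_neg]
        intro hle
        have := Submodule.finrank_mono hle
        rw [mem_gr.1 hP] at this
        omega
  calc ∑ P ∈ gr F V 2, above X P * above Y P
      = ∑ W ∈ X, ∑ W' ∈ Y, ∑ P ∈ gr F V 2, ind P W * ind P W' := by
        simp only [above, Finset.sum_mul_sum]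
        rw [Finset.sum_comm]
        exact Finset.sum_congr rfl fun W _ => Finset.sum_comm
    _ = ∑ W ∈ X, ∑ W' ∈ Y, ((if finrank F (W ⊓ W' : Submodule F V) = 2 then (1 : ℝ) else 0)
        + (Q ^ 2 + Q + 1) * (if W = W' then 1 else 0)) :=
        Finset.sum_congr rfl fun W hW => Finset.sum_congr rfl fun W' hW' => key W hW W' hW'
    _ = _ := by
        simp only [Finset.sum_add_distrib, ← Finset.mul_sum]
        congr 1
        · rw [← Finset.sum_product', pairs, Finset.card_filter]
          push_cast; rfl
        · congr 1
          simp only [Finset.sum_ite_eq]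
          rw [← Finset.sum_filter, Finset.filter_mem_eq_inter]
          simp

lemma card_cubes_mul : (Q ^ 2 + Q + 1) * b = p₂ * s := by
  have h := sum_above_plane G (Finset.Subset.refl (gr F V 3))
  have h2 : ∑ P ∈ gr F V 2, above (gr F V 3) P = ∑ P ∈ gr F V 2, s :=
    Finset.sum_congr rfl fun P hP => G.hs P hP
  rw [h2, Finset.sum_const, nsmul_eq_mul, G.hp, G.hb] at h
  exact h.symm

lemma pairs_total : pairs (gr F V 3) (gr F V 3) = p₂ * s * (s - 1) := by
  classical
  have h := sum_above_mul G (Finset.Subset.refl (gr F V 3)) (Finset.Subset.refl (gr F V 3))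
  have h2 : ∑ P ∈ gr F V 2, above (gr F V 3) P * above (gr F V 3) P = ∑ P ∈ gr F V 2, s * s :=
    Finset.sum_congr rfl fun P hP => by rw [above, G.hs P hP]
  rw [h2, Finset.sum_const, nsmul_eq_mul, G.hp, Finset.inter_self, G.hb, card_cubes_mul G] at h
  linear_combination -h

lemma pairs_total_pos : 0 < pairs (gr F V 3) (gr F V 3) := by
  rw [pairs_total G]
  have := G.s_ge
  have := G.hQ
  have := G.p_pos
  have h1 : 0 < s := by linarith
  have h2 : 0 < s - 1 := by linarith
  positivity

lemma sum_above_mul_eq {X Y : Finset (Submodule F V)} (hX : X ⊆ gr F V 3) (hY : Y ⊆ gr F V 3) :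
    ∑ P ∈ gr F V 2, above X P * above Y P
      = ∑ P ∈ gr F V 2, (above X P - s * X.card / b) * (above Y P - s * Y.card / b)
        + p₂ * s ^ 2 * (X.card / b * (Y.card / b)) := by
  have e : ∀ P ∈ gr F V 2, above X P * above Y P
      = (above X P - s * X.card / b) * (above Y P - s * Y.card / b)
        + (s * X.card / b * above Y P + s * Y.card / b * above X P
          - s * X.card / b * (s * Y.card / b)) := fun P _ => by ring
  rw [Finset.sum_congr rfl e, Finset.sum_add_distrib, Finset.sum_sub_distrib,
    Finset.sum_add_distrib, ← Finset.mul_sum, ← Finset.mul_sum, sum_above_plane G hX,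
    sum_above_plane G hY, Finset.sum_const, nsmul_eq_mul, G.hp]
  have hb := G.b_pos
  congr 1
  field_simp
  linear_combination (2 * s * X.card * Y.card) * card_cubes_mul G

/-- Expander mixing for the graph on `3`-spaces whose edges are the pairs meeting in a plane: the
density of edges between `X` and `Y` exceeds the product of the measures by at most `4 / Q` times
the larger measure. -/
lemma mix_upper {X Y : Finset (Submodule F V)} (hX : X ⊆ gr F V 3) (hY : Y ⊆ gr F V 3)
    (hXY : X.card ≤ Y.card) :
    pairs X Y ≤ pairs (gr F V 3) (gr F V 3) *
      (X.card / b * (Y.card / b) + 4 / Q * (Y.card / b)) := by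
  classical
  have hQ := G.hQ
  have hs := G.s_ge
  have hb := G.b_pos
  have hp := G.p_pos
  have h1 := sum_above_mul G hX hY
  have h2 := sum_above_mul_eq G hX hY
  have hXY' : (X.card : ℝ) ≤ Y.card := by exact_mod_cast hXY
  have hcov : (∑ P ∈ gr F V 2, (above X P - s * X.card / b) * (above Y P - s * Y.card / b))
      * (Q + 1) ≤ s * Y.card * (Q ^ 2 + 2 * Q + 2) := by
    have a1 := plane_var G hX
    have a2 := plane_var G hY
    have a3 : ∑ P ∈ gr F V 2, (above X P - s * X.card / b) * (above Y P - s * Y.card / b)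
        ≤ ((∑ P ∈ gr F V 2, (above X P - s * X.card / b) ^ 2)
          + ∑ P ∈ gr F V 2, (above Y P - s * Y.card / b) ^ 2) / 2 := by
      rw [← Finset.sum_add_distrib, Finset.sum_div]
      refine Finset.sum_le_sum fun P _ => ?_
      nlinarith [sq_nonneg ((above X P - s * X.card / b) - (above Y P - s * Y.card / b))]
    have a4 : s * X.card * (Q ^ 2 + 2 * Q + 2) ≤ s * Y.card * (Q ^ 2 + 2 * Q + 2) := by
      gcongr
      linarith
    have a5 := mul_le_mul_of_nonneg_right a3 (show 0 ≤ Q + 1 by linarith)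
    linarith
  set cov := ∑ P ∈ gr F V 2, (above X P - s * X.card / b) * (above Y P - s * Y.card / b)
  set x : ℝ := X.card / b with hx
  set y : ℝ := Y.card / b with hy
  have hy0 : 0 ≤ y := by positivity
  have hx0 : 0 ≤ x := by positivity
  have hx1 : x ≤ 1 := by
    rw [hx, div_le_one hb, ← G.hb]; exact_mod_cast Finset.card_le_card hX
  have hs0 : 0 < s := by linarith
  -- the normalized covariance is at most `2 / Q`
  have hcov2 : cov ≤ p₂ * s ^ 2 * (2 / Q * y) := by
    have k1 : 0 < Q ^ 2 + Q + 1 := by positivity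
    have : cov * (Q + 1) * (Q ^ 2 + Q + 1) ≤ p₂ * s ^ 2 * y * (Q ^ 2 + 2 * Q + 2) := by
      calc cov * (Q + 1) * (Q ^ 2 + Q + 1)
          ≤ s * Y.card * (Q ^ 2 + 2 * Q + 2) * (Q ^ 2 + Q + 1) := by gcongr
        _ = _ := by
          rw [show (Y.card : ℝ) = b * y by rw [hy]; field_simp]
          linear_combination s * y * (Q ^ 2 + 2 * Q + 2) * card_cubes_mul G
    have h3 : p₂ * s ^ 2 * y * (Q ^ 2 + 2 * Q + 2)
        ≤ p₂ * s ^ 2 * (2 / Q * y) * ((Q + 1) * (Q ^ 2 + Q + 1)) := by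
      have : Q ^ 2 + 2 * Q + 2 ≤ 2 / Q * ((Q + 1) * (Q ^ 2 + Q + 1)) := by
        rw [div_mul_eq_mul_div, le_div_iff₀ (by linarith)]
        nlinarith [sq_nonneg Q, pow_pos (show 0 < Q by linarith) 3]
      calc _ ≤ p₂ * s ^ 2 * y * (2 / Q * ((Q + 1) * (Q ^ 2 + Q + 1))) := by gcongr
        _ = _ := by ring
    have h4 : 0 < (Q + 1) * (Q ^ 2 + Q + 1) := by positivity
    refine le_of_mul_le_mul_right ?_ h4
    linarith
  have hle : pairs X Y ≤ p₂ * s ^ 2 * (x * y + 2 / Q * y) := by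
    have : 0 ≤ (Q ^ 2 + Q + 1) * ((X ∩ Y).card : ℝ) := by positivity
    linarith
  rw [pairs_total G]
  refine hle.trans ?_
  have hss : s ≤ (s - 1) * (1 + 1 / Q) := by
    have : 1 ≤ (s - 1) / Q := by rw [le_div_iff₀ (by linarith)]; linarith
    have : (s - 1) * (1 + 1 / Q) = s - 1 + (s - 1) / Q := by ring
    linarith
  have hfin : (1 + 1 / Q) * (x * y + 2 / Q * y) ≤ x * y + 4 / Q * y := by
    have hi : 1 / Q ≤ 1 / 2 := one_div_le_one_div_of_le (by norm_num) hQ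
    have hi0 : 0 < 1 / Q := by positivity
    set t := 1 / Q with ht
    have e2 : 2 / Q = 2 * t := by rw [ht]; ring
    have e4 : 4 / Q = 4 * t := by rw [ht]; ring
    rw [e2, e4]
    have g1 : t * y * x ≤ t * y := mul_le_of_le_one_right (by positivity) hx1
    have g2 : t * (t * y) ≤ 1 / 2 * (t * y) := by gcongr
    nlinarith
  calc p₂ * s ^ 2 * (x * y + 2 / Q * y) = p₂ * s * (x * y + 2 / Q * y) * s := by ring
    _ ≤ p₂ * s * (x * y + 2 / Q * y) * ((s - 1) * (1 + 1 / Q)) := by gcongr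
    _ = p₂ * s * (s - 1) * ((1 + 1 / Q) * (x * y + 2 / Q * y)) := by ring
    _ ≤ p₂ * s * (s - 1) * (x * y + 4 / Q * y) := by
        have : 0 ≤ s - 1 := by linarith
        gcongr

/-- The matching lower bound, which needs only that the variance over the planes is nonnegative. -/
lemma mix_lower {X : Finset (Submodule F V)} (hX : X ⊆ gr F V 3) :
    pairs (gr F V 3) (gr F V 3) * ((X.card / b) ^ 2 - 1 / Q * (X.card / b)) ≤ pairs X X := by
  classical
  have hQ := G.hQ
  have hs := G.s_ge
  have hb := G.b_pos
  have hp := G.p_pos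
  have h1 := sum_above_mul G hX hX
  have h2 := sum_above_mul_eq G hX hX
  have h3 : 0 ≤ ∑ P ∈ gr F V 2, (above X P - s * X.card / b) * (above X P - s * X.card / b) :=
    Finset.sum_nonneg fun P _ => mul_self_nonneg _
  rw [Finset.inter_self] at h1
  set x : ℝ := X.card / b with hx
  have hx0 : 0 ≤ x := by positivity
  have h4 : (Q ^ 2 + Q + 1) * (X.card : ℝ) = p₂ * s * x := by
    rw [show (X.card : ℝ) = b * x by rw [hx]; field_simp]
    linear_combination x * card_cubes_mul G
  have h5 : p₂ * s ^ 2 * (x * x) - p₂ * s * x ≤ pairs X X := by linarith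
  refine le_trans ?_ h5
  rw [pairs_total G]
  have hs0 : 0 < s := by linarith
  have hss : 1 ≤ (s - 1) * (1 / Q) := by
    rw [mul_one_div, le_div_iff₀ (by linarith)]; linarith
  have g1 : p₂ * s * x * 1 ≤ p₂ * s * x * ((s - 1) * (1 / Q)) := by gcongr
  have g2 : 0 ≤ p₂ * s * x ^ 2 := by positivity
  nlinarith

/-- The total number of members of `X` through the lines contained in fewer than half
the average number of members of `X`, by Chebyshev's inequality. -/
lemma light_lines {X : Finset (Submodule F V)} (hX : X ⊆ gr F V 3) (hX0 : X.Nonempty) :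
    ∑ L ∈ (gr F V 1).filter (fun L => above X L < r * (X.card / b) / 2), above X L
      ≤ 2 * b := by
  have hb := G.b_pos
  have hr := G.r_pos
  have hXc : (0 : ℝ) < X.card := by exact_mod_cast hX0.card_pos
  set m : ℝ := X.card / b with hm
  have hm0 : 0 < m := by positivity
  have hv := line_var G hX
  rw [show r * X.card / b = r * m by rw [hm]; ring] at hv
  have h1 : ∀ L ∈ (gr F V 1).filter (fun L => above X L < r * m / 2),
      above X L ≤ 2 / (r * m) * (above X L - r * m) ^ 2 := by
    intro L hL
    have hlt := (Finset.mem_filter.1 hL).2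
    have hrm : 0 < r * m := by positivity
    rw [div_mul_eq_mul_div, le_div_iff₀ hrm]
    nlinarith
  refine (Finset.sum_le_sum h1).trans ?_
  rw [← Finset.mul_sum]
  have h2 : ∑ L ∈ (gr F V 1).filter (fun L => above X L < r * m / 2), (above X L - r * m) ^ 2
      ≤ r * X.card :=
    (Finset.sum_le_sum_of_subset_of_nonneg (Finset.filter_subset _ _)
      fun _ _ _ => sq_nonneg _).trans hv
  calc 2 / (r * m) * _ ≤ 2 / (r * m) * (r * X.card) := by gcongr
    _ = 2 * b := by rw [hm]; field_simp

end Mixing2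

/-! ### Disagreeing triples -/

section Excess

variable {Q v w s r b p₂ : ℝ} (G : GrCounts F V Q v w s r b p₂)
include G

open scoped Classical in
/-- If two random members `W`, `W'` of `X` through a random line `L ≤ W` are in relation `β L W W'`
with probability more than `γ`, then the unnormalized number of such triples is at least `γ / 4`
times its expected order of magnitude. The loss is due to the lines containing few members
of `X`, which are rare. -/
lemma triples_lower {X : Finset (Submodule F V)} (hX : X ⊆ gr F V 3) (hX0 : X.Nonempty)
    (β : Submodule F V → Submodule F V → Submodule F V → Prop) {γ : ℝ}
    (hbig : 4 ≤ γ * (X.card / b) * (Q ^ 2 + Q + 1))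
    (h : γ * ((Q ^ 2 + Q + 1) * X.card) < ∑ W ∈ X, ∑ L ∈ (gr F V 1).filter (fun L => L ≤ W),
      ((X.filter fun W' => L ≤ W' ∧ β L W W').card : ℝ) / above X L) :
    γ / 4 * (X.card / b) ^ 2 * (v * r ^ 2) ≤ ∑ W ∈ X, ∑ L ∈ (gr F V 1).filter (fun L => L ≤ W),
      ((X.filter fun W' => L ≤ W' ∧ β L W W').card : ℝ) := by
  have hb := G.b_pos
  have hr := G.r_pos
  have hQ := G.hQ
  have hv := G.v_pos
  have hXc : (0 : ℝ) < X.card := by exact_mod_cast hX0.card_pos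
  have hll := light_lines G hX hX0
  set m : ℝ := X.card / b with hm
  have hm0 : 0 < m := by positivity
  have hrm : 0 < r * m := by positivity
  have hza : ∀ L W : Submodule F V,
      ((X.filter fun W' => L ≤ W' ∧ β L W W').card : ℝ) ≤ above X L := by
    intro L W
    have : above X L = ((X.filter fun W' => L ≤ W').card : ℝ) := by simp [above, ind]
    rw [this]
    exact_mod_cast Finset.card_le_card fun W' hW' => by
      simp only [Finset.mem_filter] at hW' ⊢; exact ⟨hW'.1, hW'.2.1⟩
  have hterm : ∀ W ∈ X, ∀ L ∈ (gr F V 1).filter (fun L => L ≤ W),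
      ((X.filter fun W' => L ≤ W' ∧ β L W W').card : ℝ) / above X L
      ≤ (if above X L < r * m / 2 then 1 else 0)
        + 2 / (r * m) * ((X.filter fun W' => L ≤ W' ∧ β L W W').card : ℝ) := by
    intro W _ L _
    have h0 : (0 : ℝ) ≤ ((X.filter fun W' => L ≤ W' ∧ β L W W').card : ℝ) := by positivity
    split_ifs with hlt
    · have : ((X.filter fun W' => L ≤ W' ∧ β L W W').card : ℝ) / above X L ≤ 1 :=
        div_le_one_of_le₀ (hza L W) (h0.trans (hza L W))
      have : 0 ≤ 2 / (r * m) * ((X.filter fun W' => L ≤ W' ∧ β L W W').card : ℝ) := by positivity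
      linarith
    · have hge : r * m / 2 ≤ above X L := not_lt.1 hlt
      have ha : 0 < above X L := by linarith
      rw [zero_add, div_eq_mul_inv, mul_comm]
      refine mul_le_mul_of_nonneg_right ?_ h0
      rw [← one_div, div_le_div_iff₀ ha hrm]
      linarith
  have hsum := Finset.sum_le_sum fun W hW => Finset.sum_le_sum (hterm W hW)
  simp only [Finset.sum_add_distrib, ← Finset.mul_sum] at hsum
  set Z := ∑ W ∈ X, ∑ L ∈ (gr F V 1).filter (fun L => L ≤ W),
      ((X.filter fun W' => L ≤ W' ∧ β L W W').card : ℝ) with hZ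
  have hlight : ∑ W ∈ X, ∑ L ∈ (gr F V 1).filter (fun L => L ≤ W),
      (if above X L < r * m / 2 then (1 : ℝ) else 0) ≤ 2 * b := by
    refine le_trans (le_of_eq ?_) hll
    have eR := Finset.sum_filter (s := gr F V 1) (fun L => above X L < r * m / 2) (above X)
    rw [eR]
    simp only [Finset.sum_filter]
    rw [Finset.sum_comm]
    refine Finset.sum_congr rfl fun L _ => ?_
    by_cases hl : above X L < r * m / 2
    · simp only [hl, if_true]; rfl
    · simp [hl]
  have hXb : (Q ^ 2 + Q + 1) * (X.card : ℝ) = v * r * m := by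
    rw [← G.bk, hm]; field_simp
  have h2b : 2 * b ≤ γ * m / 2 * (v * r) := by
    have e1 : γ * m / 2 * (v * r) = γ * m * (Q ^ 2 + Q + 1) / 2 * b := by
      rw [← G.bk]; ring
    rw [e1]
    gcongr
    linarith
  rw [hXb] at h
  have h5 : γ * (v * r * m) / 2 ≤ 2 / (r * m) * Z := by linarith
  rw [div_mul_eq_mul_div, le_div_iff₀ hrm] at h5
  linarith

end Excess

end Grassmann

/-! ### Zeros of polynomials on affine subspaces -/

section Zeros

variable {F : Type} [Field F] [Fintype F]

set_option linter.unusedSectionVars false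

/-- Substituting polynomials of degree at most one does not increase the total degree. -/
lemma totalDegree_bind₁_le {σ τ : Type} (f : σ → MvPolynomial τ F)
    (hf : ∀ i, (f i).totalDegree ≤ 1) (p : MvPolynomial σ F) :
    (bind₁ f p).totalDegree ≤ p.totalDegree := by
  classical
  rw [bind₁, aeval_def, eval₂_eq]
  refine totalDegree_finsetSum_le fun m hm => ?_
  refine (totalDegree_mul _ _).trans ?_
  rw [algebraMap_eq, totalDegree_C, zero_add]
  refine (totalDegree_finsetProd _ _).trans ?_
  refine le_trans ?_ (le_totalDegree hm)
  refine Finset.sum_le_sum fun i _ => ?_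
  refine (totalDegree_pow _ _).trans ?_
  calc m i * (f i).totalDegree ≤ m i * 1 := Nat.mul_le_mul_left _ (hf i)
    _ = m i := mul_one _

open scoped Classical in
/-- A polynomial of degree at most `d` that does not vanish identically on the translate `x + W`,
where `W` has dimension `k + 1`, has at most `d q ^ k` zeros there. -/
lemma card_zeros_le {n d k : ℕ} (p : MvPolynomial (Fin n) F) (hp : p.totalDegree ≤ d)
    (x : Fin n → F) (W : Submodule F (Fin n → F)) (hW : Module.finrank F W = k + 1)
    (hne : ∃ w ∈ W, eval (x + w) p ≠ 0) :
    (Finset.univ.filter fun w : Fin n → F => w ∈ W ∧ eval (x + w) p = 0).card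
      ≤ d * Fintype.card F ^ k := by
  let e : (Fin (k + 1) → F) ≃ₗ[F] W := (Module.finBasisOfFinrankEq F W hW).equivFun.symm
  let f : Fin n → MvPolynomial (Fin (k + 1)) F := fun i =>
    C (x i) + ∑ j, C ((e (Pi.single j 1) : Fin n → F) i) * X j
  have hf : ∀ i, (f i).totalDegree ≤ 1 := by
    intro i
    refine (totalDegree_add _ _).trans (max_le (by simp) ?_)
    refine totalDegree_finsetSum_le fun j _ => (totalDegree_mul _ _).trans ?_
    simp
  have hev : ∀ y, eval y (bind₁ f p) = eval (x + (e y : Fin n → F)) p := by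
    intro y
    have h1 : eval y (bind₁ f p) = eval (fun i => eval y (f i)) p := by
      simp only [eval, eval₂Hom_bind₁]
    rw [h1]
    congr 2
    funext i
    simp only [f, map_add, eval_C, map_sum, map_mul, eval_X, Pi.add_apply]
    congr 1
    have : y = ∑ j, y j • (Pi.single j 1 : Fin (k + 1) → F) := by
      funext j; simp [Finset.sum_apply, Pi.single_apply]
    conv_rhs => rw [this]
    rw [map_sum]
    simp only [map_smul, AddSubmonoidClass.coe_finsetSum, Submodule.coe_smul, Finset.sum_apply,
      Pi.smul_apply, smul_eq_mul]
    exact Finset.sum_congr rfl fun j _ => mul_comm _ _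
  have hp' : bind₁ f p ≠ 0 := by
    obtain ⟨w, hw, hw0⟩ := hne
    intro h0
    have := hev (e.symm ⟨w, hw⟩)
    rw [h0] at this
    simp only [map_zero, LinearEquiv.apply_symm_apply] at this
    exact hw0 this.symm
  have hsz := schwartz_zippel_totalDegree hp' (Finset.univ : Finset F)
  have hq : 0 < Fintype.card F := Fintype.card_pos
  rw [Finset.card_univ, div_le_div_iff₀ (by positivity) (by positivity)] at hsz
  have hsz' : (Finset.filter (fun y => eval y (bind₁ f p) = 0)
      (Fintype.piFinset fun _ : Fin (k + 1) => (Finset.univ : Finset F))).card * Fintype.card F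
      ≤ (bind₁ f p).totalDegree * Fintype.card F ^ (k + 1) := by exact_mod_cast hsz
  have hcard : (Finset.univ.filter fun w : Fin n → F => w ∈ W ∧ eval (x + w) p = 0).card
      ≤ (Finset.filter (fun y => eval y (bind₁ f p) = 0)
      (Fintype.piFinset fun _ : Fin (k + 1) => (Finset.univ : Finset F))).card := by
    refine Finset.card_le_card_of_surjOn (fun y => (e y : Fin n → F)) ?_
    intro w hw
    simp only [Finset.coe_filter, Finset.mem_univ, true_and, Set.mem_ofPred_eq] at hw
    refine ⟨e.symm ⟨w, hw.1⟩, ?_, by simp⟩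
    simp only [Finset.coe_filter, Fintype.piFinset_univ, Finset.mem_univ, true_and,
      Set.mem_ofPred_eq, hev, LinearEquiv.apply_symm_apply]
    exact hw.2
  refine hcard.trans (Nat.le_of_mul_le_mul_right (hsz'.trans ?_) hq)
  calc (bind₁ f p).totalDegree * Fintype.card F ^ (k + 1)
      ≤ d * Fintype.card F ^ (k + 1) :=
        Nat.mul_le_mul_right _ ((totalDegree_bind₁_le f hf p).trans hp)
    _ = d * Fintype.card F ^ k * Fintype.card F := by ring

end Zeros

/-! ### Subspaces through a point -/

section Transfer

open Module AffineSubspace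

set_option linter.unusedSectionVars false

variable {F : Type} [Field F] [Fintype F] {n : ℕ}

lemma mk'_inj {x : Fin n → F} {U W : Submodule F (Fin n → F)} (h : mk' x U = mk' x W) :
    U = W := by
  have := congrArg AffineSubspace.direction h
  simpa using this

lemma mem_mk'_add {x u : Fin n → F} {U : Submodule F (Fin n → F)} :
    x + u ∈ mk' x U ↔ u ∈ U := by
  rw [mem_mk']; simp

lemma mk'_add {x u : Fin n → F} {U : Submodule F (Fin n → F)} (hu : u ∈ U) :
    mk' (x + u) U = mk' x U := by
  have h := mk'_eq (mem_mk'_add.2 hu : x + u ∈ mk' x U)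
  rwa [direction_mk'] at h

lemma isCube_iff {x : Fin n → F} {C : AffineSubspace F (Fin n → F)} :
    IsCube F n C ∧ x ∈ C ↔ ∃ W ∈ gr F (Fin n → F) 3, mk' x W = C := by
  constructor
  · rintro ⟨⟨_, h⟩, hx⟩
    exact ⟨C.direction, mem_gr.2 h, mk'_eq hx⟩
  · rintro ⟨W, hW, rfl⟩
    exact ⟨⟨mk'_nonempty _ _, by rw [direction_mk']; exact mem_gr.1 hW⟩, self_mem_mk' _ _⟩

lemma isLine_iff {x : Fin n → F} {C : AffineSubspace F (Fin n → F)} :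
    IsLine F n C ∧ x ∈ C ↔ ∃ W ∈ gr F (Fin n → F) 1, mk' x W = C := by
  constructor
  · rintro ⟨⟨_, h⟩, hx⟩
    exact ⟨C.direction, mem_gr.2 h, mk'_eq hx⟩
  · rintro ⟨W, hW, rfl⟩
    exact ⟨⟨mk'_nonempty _ _, by rw [direction_mk']; exact mem_gr.1 hW⟩, self_mem_mk' _ _⟩

lemma planePair_mk'_iff {x : Fin n → F} {W W' : Submodule F (Fin n → F)}
    (hW : W ∈ gr F (Fin n → F) 3) (hW' : W' ∈ gr F (Fin n → F) 3) :
    PlanePair F n (mk' x W) (mk' x W') ↔ finrank F (W ⊓ W' : Submodule F (Fin n → F)) = 2 := by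
  have hx : x ∈ mk' x W := self_mem_mk' _ _
  have hx' : x ∈ mk' x W' := self_mem_mk' _ _
  have hd : (mk' x W ⊓ mk' x W').direction = W ⊓ W' := by
    rw [direction_inf_of_mem hx hx', direction_mk', direction_mk']
  unfold PlanePair
  rw [hd]
  constructor
  · exact fun h => h.2.2.2
  · exact fun h => ⟨(isCube_iff.2 ⟨W, hW, rfl⟩).1, (isCube_iff.2 ⟨W', hW', rfl⟩).1,
      ⟨x, hx, hx'⟩, h⟩

variable (T : AffineSubspace F (Fin n → F) → (Fin n → F) → F)

open scoped Classical in
/-- The directions of the cubes of `𝒞_{x,σ}`. -/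
noncomputable def val (x : Fin n → F) (σ : F) : Finset (Submodule F (Fin n → F)) :=
  (gr F (Fin n → F) 3).filter fun W => T (mk' x W) x = σ

lemma val_subset (x : Fin n → F) (σ : F) : val T x σ ⊆ gr F (Fin n → F) 3 := by
  classical exact Finset.filter_subset _ _

lemma mem_val {x : Fin n → F} {σ : F} {W : Submodule F (Fin n → F)} :
    W ∈ val T x σ ↔ W ∈ gr F (Fin n → F) 3 ∧ T (mk' x W) x = σ := by
  simp [val]

lemma mk'_injOn (x : Fin n → F) (s : Set (Submodule F (Fin n → F))) :
    Set.InjOn (fun W => mk' x W) s := fun _ _ _ _ h => mk'_inj h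

lemma cubesVal_eq (x : Fin n → F) (σ : F) :
    cubesVal F n T x σ = (fun W => mk' x W) '' (val T x σ : Set (Submodule F (Fin n → F))) := by
  ext C
  simp only [cubesVal, Set.mem_ofPred_eq, Set.mem_image, Finset.mem_coe, mem_val]
  constructor
  · rintro ⟨h1, h2, h3⟩
    obtain ⟨W, hW, rfl⟩ := isCube_iff.1 ⟨h1, h2⟩
    exact ⟨W, ⟨hW, h3⟩, rfl⟩
  · rintro ⟨W, ⟨hW, h⟩, rfl⟩
    have := (isCube_iff (x := x)).2 ⟨W, hW, rfl⟩
    exact ⟨this.1, this.2, h⟩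

lemma mk'_mem_cubesVal {x : Fin n → F} {σ : F} {W : Submodule F (Fin n → F)} :
    mk' x W ∈ cubesVal F n T x σ ↔ W ∈ val T x σ := by
  rw [cubesVal_eq]
  constructor
  · rintro ⟨W', hW', h⟩
    rw [← mk'_inj h]; exact hW'
  · exact fun h => ⟨W, h, rfl⟩

open scoped Classical in
lemma ncard_sep_cubesVal (x : Fin n → F) (σ : F) (R : AffineSubspace F (Fin n → F) → Prop) :
    {C ∈ cubesVal F n T x σ | R C}.ncard = ((val T x σ).filter fun W => R (mk' x W)).card := by
  rw [← Set.ncard_coe_finset, ← (mk'_injOn x _).ncard_image]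
  congr 1
  ext C
  simp only [Set.mem_ofPred_eq, cubesVal_eq, Set.mem_image, Finset.coe_filter, Finset.mem_coe]
  constructor
  · rintro ⟨⟨W, hW, rfl⟩, h⟩; exact ⟨W, ⟨hW, h⟩, rfl⟩
  · rintro ⟨W, ⟨hW, h⟩, rfl⟩; exact ⟨⟨W, hW, rfl⟩, h⟩

lemma ncard_cubesVal (x : Fin n → F) (σ : F) :
    (cubesVal F n T x σ).ncard = (val T x σ).card := by
  rw [cubesVal_eq, (mk'_injOn x _).ncard_image, Set.ncard_coe_finset]

lemma ncard_cubesOn (x : Fin n → F) :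
    (cubesOn F n x).ncard = (gr F (Fin n → F) 3).card := by
  rw [← Set.ncard_coe_finset, ← (mk'_injOn x _).ncard_image]
  congr 1
  ext C
  simp only [cubesOn, Set.mem_ofPred_eq, isCube_iff, Set.mem_image, Finset.mem_coe]

/-- The number of lines `ℓ` and cubes `C₁, C₂` of `𝒞_{x,σ}` with `x ∈ ℓ ⊆ C₁ ∩ C₂` and
`T(C₁)|_ℓ ≠ T(C₂)|_ℓ`. -/
noncomputable def disag (x : Fin n → F) (σ : F) : ℝ :=
  open scoped Classical in
  ∑ W ∈ val T x σ, ∑ L ∈ (gr F (Fin n → F) 1).filter (fun L => L ≤ W),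
    (((val T x σ).filter fun W' => L ≤ W' ∧
      ¬ LineAgree F n T (mk' x W) (mk' x W') (mk' x L)).card : ℝ)

lemma disag_nonneg (x : Fin n → F) (σ : F) : 0 ≤ disag T x σ :=
  Finset.sum_nonneg fun _ _ => Finset.sum_nonneg fun _ _ => by positivity

variable {Q v w s r b p₂ : ℝ} (G : GrCounts F (Fin n → F) Q v w s r b p₂)
include G

lemma muX_val (x : Fin n → F) (σ : F) :
    muX F n x (cubesVal F n T x σ) = (val T x σ).card / b := by
  rw [muX, ncard_cubesVal, ncard_cubesOn, G.hb]

/-- A pair satisfying (i) but not (ii) has many disagreeing triples. -/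
lemma disag_lower {d : ℕ} {ε : ℝ} {x : Fin n → F} {σ : F} (hε : 0 < ε)
    (hex : ¬ Excellent F n T d ε x σ) (hi : ε / 5 ≤ (val T x σ).card / b)
    (hbig : 4 ≤ gam d * (ε / 5) * Q) :
    gam d / 4 * ((val T x σ).card / b) ^ 2 * (v * r ^ 2) ≤ disag T x σ := by
  classical
  have hb := G.b_pos
  have hQ := G.hQ
  have hγ : 0 ≤ gam d := by unfold gam; positivity
  have hne : (val T x σ).Nonempty := by
    rw [Finset.nonempty_iff_ne_empty]
    intro h0
    rw [h0] at hi
    simp at hi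
    linarith
  refine le_trans (triples_lower G (val_subset T x σ) hne
    (fun L W W' => ¬ LineAgree F n T (mk' x W) (mk' x W') (mk' x L)) ?_ ?_) (le_of_eq ?_)
  · refine hbig.trans ?_
    have : Q ≤ Q ^ 2 + Q + 1 := by nlinarith
    gcongr
  · unfold Excellent at hex
    rw [muX_val T G] at hex
    have h2 := lt_of_not_ge fun h => hex ⟨hi, h⟩
    have hcount : (({p : AffineSubspace F (Fin n → F) × AffineSubspace F (Fin n → F) |
        p.1 ∈ cubesVal F n T x σ ∧ IsLine F n p.2 ∧ x ∈ p.2 ∧ p.2 ≤ p.1}).ncard : ℝ)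
        = (Q ^ 2 + Q + 1) * (val T x σ).card := by
      have e : {p : AffineSubspace F (Fin n → F) × AffineSubspace F (Fin n → F) |
          p.1 ∈ cubesVal F n T x σ ∧ IsLine F n p.2 ∧ x ∈ p.2 ∧ p.2 ≤ p.1}
          = (fun p : Submodule F (Fin n → F) × Submodule F (Fin n → F) =>
              (mk' x p.1, mk' x p.2)) ''
            (((val T x σ ×ˢ gr F (Fin n → F) 1).filter fun p => p.2 ≤ p.1 : Finset _) :
              Set (Submodule F (Fin n → F) × Submodule F (Fin n → F))) := by
        ext ⟨C, ℓ⟩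
        simp only [Set.mem_ofPred_eq, Set.mem_image, Finset.coe_filter, Finset.mem_product,
          Prod.mk.injEq, Prod.exists]
        constructor
        · rintro ⟨h1, h2, h3, h4⟩
          rw [cubesVal_eq] at h1
          obtain ⟨W, hW, rfl⟩ := h1
          obtain ⟨L, hL, rfl⟩ := isLine_iff.1 ⟨h2, h3⟩
          exact ⟨W, L, ⟨⟨hW, hL⟩, (mk'_le_mk'_iff x).1 h4⟩, rfl, rfl⟩
        · rintro ⟨W, L, ⟨⟨hW, hL⟩, h⟩, rfl, rfl⟩
          have := (isLine_iff (x := x)).2 ⟨L, hL, rfl⟩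
          exact ⟨(mk'_mem_cubesVal T).2 hW, this.1, this.2, (mk'_le_mk'_iff x).2 h⟩
      rw [e, Set.InjOn.ncard_image, Set.ncard_coe_finset, Finset.card_filter,
        Finset.sum_product]
      · push_cast
        have : ∀ W ∈ val T x σ, ∑ L ∈ gr F (Fin n → F) 1, (if L ≤ W then (1 : ℝ) else 0)
            = Q ^ 2 + Q + 1 := fun W hW => by
          rw [← G.hk1 W (val_subset T x σ hW)]; rfl
        rw [Finset.sum_congr rfl this]
        simp; ring
      · rintro ⟨a, a'⟩ _ ⟨c, c'⟩ _ h
        simp only [Prod.mk.injEq] at h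
        rw [mk'_inj h.1, mk'_inj h.2]
    rw [hcount] at h2
    refine h2.trans_eq ?_
    rw [cubesVal_eq, finsum_mem_image (mk'_injOn x _), finsum_mem_coe_finset]
    refine Finset.sum_congr rfl fun W hW => ?_
    have e : {ℓ : AffineSubspace F (Fin n → F) | IsLine F n ℓ ∧ x ∈ ℓ ∧ ℓ ≤ mk' x W}
        = (fun L => mk' x L) '' (((gr F (Fin n → F) 1).filter fun L => L ≤ W : Finset _) :
            Set (Submodule F (Fin n → F))) := by
      ext ℓ
      simp only [Set.mem_ofPred_eq, Set.mem_image, Finset.coe_filter]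
      constructor
      · rintro ⟨h2, h3, h4⟩
        obtain ⟨L, hL, rfl⟩ := isLine_iff.1 ⟨h2, h3⟩
        exact ⟨L, ⟨hL, (mk'_le_mk'_iff x).1 h4⟩, rfl⟩
      · rintro ⟨L, ⟨hL, h⟩, rfl⟩
        have := (isLine_iff (x := x)).2 ⟨L, hL, rfl⟩
        exact ⟨this.1, this.2, (mk'_le_mk'_iff x).2 h⟩
    rw [e, finsum_mem_image (mk'_injOn x _), finsum_mem_coe_finset]
    refine Finset.sum_congr rfl fun L hL => ?_
    rw [← cubesVal_eq, ncard_sep_cubesVal, ncard_sep_cubesVal]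
    simp only [mk'_le_mk'_iff]
    have : ((val T x σ).filter fun W' => L ≤ W').card = above (val T x σ) L := by
      simp [above, ind]
    rw [this]
    congr!
  · unfold disag
    congr!

end Transfer

/-! ### Averaging over the base point -/

section Averaging

open Module AffineSubspace

set_option linter.unusedSectionVars false

variable {F : Type} [Field F] [Fintype F] {n : ℕ}

lemma card_vec : Fintype.card (Fin n → F) = Fintype.card F ^ n := by simp

open scoped Classical in
/-- A property of points that holds at most `M` times on every translate of `U` has density at
most `M / |U|`. -/
lemma count_translate (U : Submodule F (Fin n → F)) (R : (Fin n → F) → Prop)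
    [DecidablePred R] {M : ℕ}
    (h : ∀ x, (Finset.univ.filter fun u => u ∈ U ∧ R (x + u)).card ≤ M) :
    (Finset.univ.filter R).card * Fintype.card F ^ finrank F U ≤ Fintype.card F ^ n * M := by
  rw [← card_filter_mem U, ← card_vec (F := F) (n := n)]
  have e : ∀ u : Fin n → F, (Finset.univ.filter fun x => R (x + u)).card
      = (Finset.univ.filter R).card := by
    intro u
    refine Finset.card_bij (fun x _ => x + u) ?_ ?_ ?_
    · intro x hx; simpa using hx
    · intro x _ y _ hxy; exact add_right_cancel hxy
    · intro x hx; exact ⟨x - u, by simpa using hx, by simp⟩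
  calc (Finset.univ.filter R).card * (Finset.univ.filter fun u => u ∈ U).card
      = ∑ u ∈ Finset.univ.filter (fun u => u ∈ U), (Finset.univ.filter fun x => R (x + u)).card := by
        rw [Finset.sum_congr rfl fun u _ => e u, Finset.sum_const, smul_eq_mul, mul_comm]
    _ = ∑ x : Fin n → F, (Finset.univ.filter fun u => u ∈ U ∧ R (x + u)).card := by
        simp only [Finset.card_filter, Finset.sum_filter]
        conv_rhs => rw [Finset.sum_comm]
        refine Finset.sum_congr rfl fun u _ => ?_
        by_cases h1 : u ∈ U <;> simp [h1]
    _ ≤ ∑ x : Fin n → F, M := Finset.sum_le_sum fun x _ => h x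
    _ = Fintype.card (Fin n → F) * M := by simp

variable (T : AffineSubspace F (Fin n → F) → (Fin n → F) → F)

open scoped Classical in
/-- Over a uniformly random `x`, the entries at `x + W` and `x + W'` coincide at `x` and yet differ
somewhere on `x + U` with probability at most `d / q`: on each translate of `U`, their difference
is a nonzero polynomial and Schwartz-Zippel applies. -/
lemma coin_count {d k : ℕ} (hT : DegTable F n d T) {U W W' : Submodule F (Fin n → F)}
    (hU : finrank F U = k + 1) (hW : W ∈ gr F (Fin n → F) 3) (hW' : W' ∈ gr F (Fin n → F) 3)
    (h : U ≤ W) (h' : U ≤ W') :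
    (Finset.univ.filter fun x => T (mk' x W) x = T (mk' x W') x ∧
      ¬ LineAgree F n T (mk' x W) (mk' x W') (mk' x U)).card * Fintype.card F
      ≤ Fintype.card F ^ n * d := by
  have hpos : 0 < Fintype.card F ^ k := pow_pos Fintype.card_pos _
  refine Nat.le_of_mul_le_mul_right ?_ hpos
  have := count_translate U (fun x => T (mk' x W) x = T (mk' x W') x ∧
      ¬ LineAgree F n T (mk' x W) (mk' x W') (mk' x U)) (M := d * Fintype.card F ^ k) ?_
  · rw [hU, pow_succ', ← mul_assoc, ← mul_assoc] at this
    exact this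
  intro x
  by_cases hL : LineAgree F n T (mk' x W) (mk' x W') (mk' x U)
  · rw [Finset.card_eq_zero.2]
    · exact Nat.zero_le _
    · refine Finset.filter_eq_empty_iff.2 fun u _ hu => hu.2.2 ?_
      rwa [mk'_add (h hu.1), mk'_add (h' hu.1), mk'_add hu.1]
  · obtain ⟨p₁, hp₁, e₁⟩ := hT _ ((isCube_iff (x := x)).2 ⟨W, hW, rfl⟩).1
    obtain ⟨p₂, hp₂, e₂⟩ := hT _ ((isCube_iff (x := x)).2 ⟨W', hW', rfl⟩).1
    have hp : (p₁ - p₂).totalDegree ≤ d := (totalDegree_sub _ _).trans (max_le hp₁ hp₂)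
    have he : ∀ u ∈ U, eval (x + u) (p₁ - p₂) = T (mk' x W) (x + u) - T (mk' x W') (x + u) := by
      intro u hu
      rw [map_sub, e₁ _ (mem_mk'_add.2 (h hu)), e₂ _ (mem_mk'_add.2 (h' hu))]
    refine le_trans (Finset.card_le_card ?_) (card_zeros_le (p₁ - p₂) hp x U hU ?_)
    · intro u hu
      simp only [Finset.mem_filter, Finset.mem_univ, true_and] at hu ⊢
      refine ⟨hu.1, ?_⟩
      rw [he u hu.1, sub_eq_zero]
      have := hu.2.1
      rwa [mk'_add (h hu.1), mk'_add (h' hu.1)] at this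
    · unfold LineAgree at hL
      push Not at hL
      obtain ⟨z, hz, hne⟩ := hL
      have hz' : z - x ∈ U := by
        have := (mem_mk' (p := x) (direction := U) (q := z)).1 hz
        simpa using this
      refine ⟨z - x, hz', ?_⟩
      rw [he _ hz', sub_ne_zero]
      simpa using hne

open scoped Classical in
/-- The pairs of directions of cubes meeting in a plane. -/
noncomputable def planePairs (F : Type) [Field F] [Fintype F] (n : ℕ) :
    Finset (Submodule F (Fin n → F) × Submodule F (Fin n → F)) :=
  (gr F (Fin n → F) 3 ×ˢ gr F (Fin n → F) 3).filter
    fun W => finrank F (W.1 ⊓ W.2 : Submodule F (Fin n → F)) = 2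

lemma card_planePairs :
    ((planePairs F n).card : ℝ) = pairs (gr F (Fin n → F) 3) (gr F (Fin n → F) 3) := by
  unfold planePairs pairs; congr!

lemma mem_planePairs {W : Submodule F (Fin n → F) × Submodule F (Fin n → F)} :
    W ∈ planePairs F n ↔ (W.1 ∈ gr F (Fin n → F) 3 ∧ W.2 ∈ gr F (Fin n → F) 3) ∧
      finrank F (W.1 ⊓ W.2 : Submodule F (Fin n → F)) = 2 := by
  simp [planePairs]

lemma planePair_mem_iff {x : Fin n → F} {C₁ C₂ : AffineSubspace F (Fin n → F)} :
    PlanePair F n C₁ C₂ ∧ x ∈ C₁ ∧ x ∈ C₂ ↔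
      ∃ W ∈ planePairs F n, mk' x W.1 = C₁ ∧ mk' x W.2 = C₂ := by
  constructor
  · rintro ⟨h, h1, h2⟩
    obtain ⟨W₁, hW₁, rfl⟩ := isCube_iff.1 ⟨h.1, h1⟩
    obtain ⟨W₂, hW₂, rfl⟩ := isCube_iff.1 ⟨h.2.1, h2⟩
    exact ⟨(W₁, W₂), mem_planePairs.2 ⟨⟨hW₁, hW₂⟩, (planePair_mk'_iff hW₁ hW₂).1 h⟩, rfl, rfl⟩
  · rintro ⟨⟨W₁, W₂⟩, hW, rfl, rfl⟩
    have h := mem_planePairs.1 hW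
    exact ⟨(planePair_mk'_iff h.1.1 h.1.2).2 h.2, self_mem_mk' _ _, self_mem_mk' _ _⟩

open scoped Classical in
/-- Double counting of the pairs of cubes meeting in a plane together with a point of that
plane. -/
lemma ncard_planePair (R : AffineSubspace F (Fin n → F) → AffineSubspace F (Fin n → F) → Prop) :
    Fintype.card F ^ 2 * {p : AffineSubspace F (Fin n → F) × AffineSubspace F (Fin n → F) |
        PlanePair F n p.1 p.2 ∧ R p.1 p.2}.ncard =
      ∑ x : Fin n → F,
        ((planePairs F n).filter fun W => R (mk' x W.1) (mk' x W.2)).card := by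
  have : Finite (AffineSubspace F (Fin n → F)) :=
    Finite.of_injective (fun A : AffineSubspace F (Fin n → F) => (A : Set (Fin n → F)))
      SetLike.coe_injective
  set A := {p : AffineSubspace F (Fin n → F) × AffineSubspace F (Fin n → F) |
        PlanePair F n p.1 p.2 ∧ R p.1 p.2} with hA
  have hfin : A.Finite := Set.toFinite _
  have hd := Finset.sum_card_bipartiteAbove_eq_sum_card_bipartiteBelow
    (s := hfin.toFinset) (t := (Finset.univ : Finset (Fin n → F)))
    (fun p x => x ∈ p.1 ∧ x ∈ p.2)
  have h1 : ∀ p ∈ hfin.toFinset, (Finset.univ.bipartiteAbove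
      (fun (p : AffineSubspace F (Fin n → F) × AffineSubspace F (Fin n → F)) x =>
        x ∈ p.1 ∧ x ∈ p.2) p).card = Fintype.card F ^ 2 := by
    intro p hp
    rw [Set.Finite.mem_toFinset] at hp
    obtain ⟨x, hx⟩ := hp.1.2.2.1
    have hx' := (AffineSubspace.mem_inf_iff _ _ _).1 hx
    obtain ⟨⟨W₁, W₂⟩, hW, h1, h2⟩ := planePair_mem_iff.1 ⟨hp.1, hx'.1, hx'.2⟩
    rw [← (mem_planePairs.1 hW).2, ← card_filter_mem, Finset.bipartiteAbove]
    symm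
    refine Finset.card_bij (fun u _ => x + u) ?_ ?_ ?_
    · intro u hu
      simp only [Finset.mem_filter, Finset.mem_univ, true_and, Submodule.mem_inf] at hu ⊢
      rw [← h1, ← h2, mem_mk'_add, mem_mk'_add]
      exact hu
    · intro u _ u' _ h; exact add_left_cancel h
    · intro y hy
      simp only [Finset.mem_filter, Finset.mem_univ, true_and] at hy
      rw [← h1, ← h2, mem_mk', mem_mk'] at hy
      exact ⟨y - x, by simpa using hy, by simp⟩
  have h2 : ∀ x ∈ (Finset.univ : Finset (Fin n → F)), (hfin.toFinset.bipartiteBelow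
      (fun (p : AffineSubspace F (Fin n → F) × AffineSubspace F (Fin n → F)) x =>
        x ∈ p.1 ∧ x ∈ p.2) x).card
      = ((planePairs F n).filter fun W => R (mk' x W.1) (mk' x W.2)).card := by
    intro x _
    symm
    refine Finset.card_bij (fun W _ => (mk' x W.1, mk' x W.2)) ?_ ?_ ?_
    · intro W hW
      rw [Finset.mem_filter] at hW
      have := (planePair_mem_iff (x := x)).2 ⟨W, hW.1, rfl, rfl⟩
      simp only [Finset.bipartiteBelow, Finset.mem_filter, Set.Finite.mem_toFinset]
      exact ⟨⟨this.1, hW.2⟩, this.2⟩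
    · intro W _ W' _ h
      simp only [Prod.mk.injEq] at h
      exact Prod.ext (mk'_inj h.1) (mk'_inj h.2)
    · rintro ⟨C₁, C₂⟩ hC
      simp only [Finset.bipartiteBelow, Finset.mem_filter, Set.Finite.mem_toFinset] at hC
      obtain ⟨W, hW, rfl, rfl⟩ := planePair_mem_iff.1 ⟨hC.1.1, hC.2⟩
      exact ⟨W, Finset.mem_filter.2 ⟨hW, hC.1.2⟩, rfl⟩
  rw [Finset.sum_congr rfl h1, Finset.sum_congr rfl h2, Finset.sum_const, smul_eq_mul] at hd
  rw [← hd, mul_comm, Set.ncard_eq_toFinset_card A hfin]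

open scoped Classical in
/-- The tuples of the sample space, counted through the point `x`. -/
lemma ncard_omega (R : (Fin n → F) → AffineSubspace F (Fin n → F) →
      AffineSubspace F (Fin n → F) → Prop) :
    {ω ∈ OmegaD F n | R ω.2.1 ω.1.1 ω.1.2}.ncard = (Fintype.card F ^ 2 - 1) *
      ∑ x : Fin n → F,
        ((planePairs F n).filter fun W => R x (mk' x W.1) (mk' x W.2)).card := by
  set A : Finset (((Fin n → F) × (Submodule F (Fin n → F) × Submodule F (Fin n → F))) ×
      (Fin n → F)) :=
    ((Finset.univ ×ˢ planePairs F n) ×ˢ Finset.univ).filter fun a =>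
      R a.1.1 (mk' a.1.1 a.1.2.1) (mk' a.1.1 a.1.2.2) ∧ a.2 ∈ a.1.2.1 ⊓ a.1.2.2 ∧ a.2 ≠ 0 with hA
  have e : {ω ∈ OmegaD F n | R ω.2.1 ω.1.1 ω.1.2}
      = (fun a => ((mk' a.1.1 a.1.2.1, mk' a.1.1 a.1.2.2), (a.1.1, a.1.1 + a.2))) ''
        (A : Set (((Fin n → F) × (Submodule F (Fin n → F) × Submodule F (Fin n → F))) ×
      (Fin n → F))) := by
    ext ⟨⟨C₁, C₂⟩, x, y⟩
    constructor
    · rintro ⟨⟨h1, h2, h3, h4, h5, h6⟩, hR⟩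
      dsimp only at h1 h2 h3 h4 h5 h6 hR
      obtain ⟨⟨W₁, W₂⟩, hW, rfl, rfl⟩ := planePair_mem_iff.1 ⟨h1, h2, h3⟩
      simp only [mem_mk'] at h4 h5
      refine ⟨((x, (W₁, W₂)), y - x), ?_, by simp⟩
      rw [Finset.mem_coe, hA, Finset.mem_filter]
      refine ⟨by simpa using hW, hR, Submodule.mem_inf.2 ⟨by simpa using h4, by simpa using h5⟩, ?_⟩
      exact fun h => h6 (sub_eq_zero.1 h).symm
    · rintro ⟨⟨⟨x', ⟨W₁, W₂⟩⟩, u⟩, ha, h⟩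
      rw [Finset.mem_coe, hA, Finset.mem_filter] at ha
      simp only [Prod.mk.injEq] at h
      obtain ⟨⟨rfl, rfl⟩, rfl, rfl⟩ := h
      obtain ⟨ha, hR, hu, hu0⟩ := ha
      have hW : (W₁, W₂) ∈ planePairs F n := by simpa using ha
      have hP := (planePair_mem_iff (x := x')).2 ⟨_, hW, rfl, rfl⟩
      refine ⟨⟨hP.1, hP.2.1, hP.2.2, mem_mk'_add.2 hu.1, mem_mk'_add.2 hu.2, ?_⟩, hR⟩
      intro h
      exact hu0 (by simpa using h)
  rw [e, Set.InjOn.ncard_image, Set.ncard_coe_finset, hA, Finset.card_filter, Finset.sum_product,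
    Finset.sum_product, Finset.mul_sum]
  · refine Finset.sum_congr rfl fun x _ => ?_
    rw [Finset.card_filter, Finset.mul_sum]
    refine Finset.sum_congr rfl fun W hW => ?_
    by_cases hR : R x (mk' x W.1) (mk' x W.2)
    · simp only [hR, true_and, if_true, mul_one]
      rw [← Finset.card_filter, ← (mem_planePairs.1 hW).2, ← card_filter_mem]
      have : (Finset.univ.filter fun u => u ∈ W.1 ⊓ W.2 ∧ u ≠ 0)
          = (Finset.univ.filter fun u => u ∈ W.1 ⊓ W.2).erase 0 := by
        ext u; simp [and_comm]
      rw [this, Finset.card_erase_of_mem (by simp)]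
    · simp [hR]
  · rintro ⟨⟨x, ⟨W₁, W₂⟩⟩, u⟩ _ ⟨⟨x', ⟨W₁', W₂'⟩⟩, u'⟩ _ h
    simp only [Prod.mk.injEq] at h
    obtain ⟨⟨h1, h2⟩, rfl, h3⟩ := h
    rw [mk'_inj h1, mk'_inj h2, add_left_cancel h3]

end Averaging

/-! ### Estimates over the base point and the value -/

section Estimates

open Module AffineSubspace

set_option linter.unusedSectionVars false

variable {F : Type} [Field F] [Fintype F] {n : ℕ}
variable (T : AffineSubspace F (Fin n → F) → (Fin n → F) → F)

lemma sum_card_val (x : Fin n → F) :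
    ∑ σ : F, ((val T x σ).card : ℝ) = (gr F (Fin n → F) 3).card := by
  classical
  rw [← Nat.cast_sum, Finset.card_eq_sum_card_fiberwise (t := Finset.univ)
    (f := fun W => T (mk' x W) x) (fun _ _ => Finset.mem_coe.2 (Finset.mem_univ _))]
  congr 1

open scoped Classical in
/-- The disagreeing triples, counted without reference to the common value `σ`. -/
lemma sum_disag_eq (x : Fin n → F) :
    ∑ σ : F, disag T x σ = ∑ W ∈ gr F (Fin n → F) 3, ∑ L ∈ gr F (Fin n → F) 1,
      ∑ W' ∈ gr F (Fin n → F) 3, ind L W * ind L W' *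
        (if T (mk' x W) x = T (mk' x W') x ∧
          ¬ LineAgree F n T (mk' x W) (mk' x W') (mk' x L) then 1 else 0) := by
  have h : ∀ σ, disag T x σ = ∑ W ∈ gr F (Fin n → F) 3, ∑ L ∈ gr F (Fin n → F) 1,
      ∑ W' ∈ gr F (Fin n → F) 3, ind L W * ind L W' *
        (if T (mk' x W') x = T (mk' x W) x ∧
          ¬ LineAgree F n T (mk' x W) (mk' x W') (mk' x L) then 1 else 0) *
        (if T (mk' x W) x = σ then 1 else 0) := by
    intro σ
    unfold disag
    have e : val T x σ = (gr F (Fin n → F) 3).filter fun W => T (mk' x W) x = σ := by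
      ext W; rw [mem_val, Finset.mem_filter]
    rw [e, Finset.sum_filter]
    refine Finset.sum_congr rfl fun W _ => ?_
    by_cases hW : T (mk' x W) x = σ
    · rw [if_pos hW, Finset.sum_filter]
      refine Finset.sum_congr rfl fun L _ => ?_
      by_cases hL : L ≤ W
      · rw [if_pos hL, Finset.filter_filter, Finset.card_filter]
        push_cast
        refine Finset.sum_congr rfl fun W' _ => ?_
        rw [hW]
        by_cases h1 : L ≤ W' <;> by_cases h2 : T (mk' x W') x = σ <;> simp [ind, hL, h1, h2]
      · simp [ind, hL]
    · simp [hW]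
  simp only [h]
  rw [Finset.sum_comm]
  refine Finset.sum_congr rfl fun W _ => ?_
  rw [Finset.sum_comm]
  refine Finset.sum_congr rfl fun L _ => ?_
  rw [Finset.sum_comm]
  refine Finset.sum_congr rfl fun W' _ => ?_
  rw [← Finset.mul_sum]
  simp [eq_comm]

open scoped Classical in
/-- Equality of the values at `x`, split according to the common value. -/
lemma sum_planePairs_eq (x : Fin n → F) (R : F → Submodule F (Fin n → F) ×
    Submodule F (Fin n → F) → Prop) [∀ σ, DecidablePred (R σ)] :
    ((planePairs F n).filter fun W => T (mk' x W.1) x = T (mk' x W.2) x ∧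
        R (T (mk' x W.1) x) W).card
      = ∑ σ : F, (((val T x σ ×ˢ val T x σ).filter fun W =>
        finrank F (W.1 ⊓ W.2 : Submodule F (Fin n → F)) = 2).filter fun W => R σ W).card := by
  rw [Finset.card_eq_sum_card_fiberwise (t := Finset.univ)
    (f := fun W => T (mk' x W.1) x) (fun _ _ => Finset.mem_coe.2 (Finset.mem_univ _))]
  refine Finset.sum_congr rfl fun σ _ => ?_
  congr 1
  ext W
  simp only [Finset.mem_filter, mem_planePairs, Finset.mem_product, mem_val]
  constructor
  · rintro ⟨⟨⟨⟨h1, h2⟩, h3⟩, h4, h5⟩, rfl⟩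
    exact ⟨⟨⟨⟨h1, rfl⟩, ⟨h2, h4.symm⟩⟩, h3⟩, h5⟩
  · rintro ⟨⟨⟨⟨h1, rfl⟩, ⟨h2, h4⟩⟩, h3⟩, h5⟩
    exact ⟨⟨⟨⟨h1, h2⟩, h3⟩, h4.symm, h5⟩, rfl⟩

lemma natCard_pos : (0 : ℝ) < Fintype.card F := by exact_mod_cast Fintype.card_pos

variable {v w s r b p₂ : ℝ} (G : GrCounts F (Fin n → F) (Fintype.card F : ℝ) v w s r b p₂)
include G

lemma sum_mu (x : Fin n → F) : ∑ σ : F, ((val T x σ).card : ℝ) / b = 1 := by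
  rw [← Finset.sum_div, sum_card_val, G.hb, div_self G.b_pos.ne']

/-- Two cubes through a common line whose entries differ on it rarely coincide at a random point
of the line. -/
lemma sum_disag_le {d : ℕ} (hT : DegTable F n d T) :
    ∑ x : Fin n → F, ∑ σ : F, disag T x σ
      ≤ (Fintype.card F : ℝ) ^ n * (d / Fintype.card F) * (v * r ^ 2) := by
  classical
  have hq := natCard_pos (F := F)
  set M : ℝ := (Fintype.card F : ℝ) ^ n * (d / Fintype.card F) with hM
  simp only [sum_disag_eq]
  rw [Finset.sum_comm]
  calc _ ≤ ∑ W ∈ gr F (Fin n → F) 3, ∑ L ∈ gr F (Fin n → F) 1,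
      ∑ W' ∈ gr F (Fin n → F) 3, ind L W * ind L W' * M := ?_
    _ = M * (v * r ^ 2) := ?_
  · refine Finset.sum_le_sum fun W hW => ?_
    rw [Finset.sum_comm]
    refine Finset.sum_le_sum fun L hL => ?_
    rw [Finset.sum_comm]
    refine Finset.sum_le_sum fun W' hW' => ?_
    rw [← Finset.mul_sum]
    by_cases h : L ≤ W
    · by_cases h' : L ≤ W'
      · rw [ind_of_le h, ind_of_le h']
        have := coin_count T hT (mem_gr.1 hL : _ = 0 + 1) hW hW' h h'
        rw [Finset.card_filter] at this
        have h2 := (Nat.cast_le (α := ℝ)).2 this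
        push_cast at h2
        have e : M = (Fintype.card F : ℝ) ^ n * d / Fintype.card F := by rw [hM]; ring
        rw [one_mul, one_mul, one_mul, e, le_div_iff₀ hq]
        convert h2
      · simp [ind, h']
    · simp [ind, h]
  · rw [Finset.sum_comm]
    have : ∀ L ∈ gr F (Fin n → F) 1, ∑ W ∈ gr F (Fin n → F) 3, ∑ W' ∈ gr F (Fin n → F) 3,
        ind L W * ind L W' * M = r ^ 2 * M := by
      intro L hL
      simp only [← Finset.sum_mul, ← Finset.mul_sum, G.hr L hL]
      ring
    rw [Finset.sum_congr rfl this, Finset.sum_const, nsmul_eq_mul, G.hv]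
    ring

open scoped Classical in
/-- The pairs on which the test accepts have density `ε` when counted through a random point. -/
lemma sum_agree :
    ∑ x : Fin n → F, (((planePairs F n).filter fun W =>
        Agrees F n T (mk' x W.1) (mk' x W.2)).card : ℝ)
      = epsT F n T * ((Fintype.card F : ℝ) ^ n * (planePairs F n).card) := by
  have hq := natCard_pos (F := F)
  have h1 := ncard_planePair (Agrees F n T)
  have h2 := ncard_planePair (F := F) (n := n) fun _ _ => True
  have hP : (0 : ℝ) < (planePairs F n).card := by
    rw [card_planePairs]; exact pairs_total_pos G
  have h1' := congrArg (Nat.cast (R := ℝ)) h1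
  have h2' := congrArg (Nat.cast (R := ℝ)) h2
  push_cast at h1' h2'
  simp only [and_true, Finset.filter_true, Finset.sum_const, Finset.card_univ, card_vec,
    nsmul_eq_mul] at h2'
  push_cast at h2'
  rw [← h1', ← h2', epsT]
  have hne : ((({p : AffineSubspace F (Fin n → F) × AffineSubspace F (Fin n → F) |
      PlanePair F n p.1 p.2}).ncard : ℕ) : ℝ) ≠ 0 := by
    intro h0
    rw [h0, mul_zero] at h2'
    have : (0 : ℝ) < (Fintype.card F : ℝ) ^ n * (planePairs F n).card := by positivity
    linarith
  field_simp

/-- Two cubes meeting in a plane whose entries coincide at a random point of the plane mostly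
agree on the whole plane. -/
lemma sum_pairs_le {d : ℕ} (hT : DegTable F n d T) :
    ∑ x : Fin n → F, ∑ σ : F, pairs (val T x σ) (val T x σ)
      ≤ (Fintype.card F : ℝ) ^ n * (planePairs F n).card * (epsT F n T + d / Fintype.card F) := by
  classical
  have hq := natCard_pos (F := F)
  have h1 : ∀ x : Fin n → F, ∑ σ : F, pairs (val T x σ) (val T x σ)
      ≤ (((planePairs F n).filter fun W => Agrees F n T (mk' x W.1) (mk' x W.2)).card : ℝ) +
        ∑ W ∈ planePairs F n, (if T (mk' x W.1) x = T (mk' x W.2) x ∧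
          ¬ LineAgree F n T (mk' x W.1) (mk' x W.2) (mk' x (W.1 ⊓ W.2)) then (1 : ℝ) else 0) := by
    intro x
    have e := sum_planePairs_eq T x fun _ _ => True
    simp only [Finset.filter_true, and_true] at e
    have e' : ∑ σ : F, pairs (val T x σ) (val T x σ) = (((planePairs F n).filter fun W =>
        T (mk' x W.1) x = T (mk' x W.2) x).card : ℝ) := by
      unfold pairs
      rw [← Nat.cast_sum]
      congr 1
      convert e.symm
    rw [e', Finset.card_filter, Finset.card_filter]
    push_cast
    rw [← Finset.sum_add_distrib]
    refine Finset.sum_le_sum fun W _ => ?_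
    by_cases h1 : T (mk' x W.1) x = T (mk' x W.2) x
    · by_cases h2 : LineAgree F n T (mk' x W.1) (mk' x W.2) (mk' x (W.1 ⊓ W.2))
      · have : Agrees F n T (mk' x W.1) (mk' x W.2) := by
          intro z hz hz'
          refine h2 z ?_
          rw [mem_mk'] at hz hz' ⊢
          exact ⟨hz, hz'⟩
        simp [h1, h2, this]
      · simp only [h1, h2, not_false_eq_true, and_self, if_true]
        split_ifs <;> norm_num
    · simp only [h1, false_and, if_false]
      split_ifs <;> norm_num
  refine (Finset.sum_le_sum fun x _ => h1 x).trans ?_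
  rw [Finset.sum_add_distrib, sum_agree T G, Finset.sum_comm]
  have h2 : ∀ W ∈ planePairs F n, ∑ x : Fin n → F, (if T (mk' x W.1) x = T (mk' x W.2) x ∧
      ¬ LineAgree F n T (mk' x W.1) (mk' x W.2) (mk' x (W.1 ⊓ W.2)) then (1 : ℝ) else 0)
      ≤ (Fintype.card F : ℝ) ^ n * d / Fintype.card F := by
    intro W hW
    have hW' := mem_planePairs.1 hW
    have := coin_count T hT (k := 1) hW'.2 hW'.1.1 hW'.1.2 inf_le_left inf_le_right
    rw [Finset.card_filter] at this
    have h2 := (Nat.cast_le (α := ℝ)).2 this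
    push_cast at h2
    rw [le_div_iff₀ hq]
    convert h2
  refine (add_le_add_right (Finset.sum_le_sum h2) _).trans_eq ?_
  rw [Finset.sum_const, nsmul_eq_mul]
  ring

/-- By mixing, `∑ μ_x(𝒞_{x,σ})²` over `σ` is about the probability that the two entries coincide at
`x`, hence at most about `ε` on average over `x`. -/
lemma sum_mu_sq_le {d : ℕ} (hT : DegTable F n d T) :
    ∑ x : Fin n → F, ∑ σ : F, ((val T x σ).card / b) ^ 2
      ≤ (Fintype.card F : ℝ) ^ n * (epsT F n T + (d + 1) / Fintype.card F) := by
  have hq := natCard_pos (F := F)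
  have hP : (0 : ℝ) < (planePairs F n).card := by
    rw [card_planePairs]; exact pairs_total_pos G
  have h : ∀ x : Fin n → F, ∀ σ : F, (planePairs F n).card * ((val T x σ).card / b) ^ 2
      ≤ pairs (val T x σ) (val T x σ)
        + (planePairs F n).card / Fintype.card F * ((val T x σ).card / b) := by
    intro x σ
    have := mix_lower G (val_subset T x σ)
    rw [← card_planePairs] at this
    have e : ((planePairs F n).card : ℝ) * (((val T x σ).card / b) ^ 2
        - 1 / Fintype.card F * ((val T x σ).card / b))
      = (planePairs F n).card * ((val T x σ).card / b) ^ 2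
        - (planePairs F n).card / Fintype.card F * ((val T x σ).card / b) := by ring
    linarith
  have h2 := Finset.sum_le_sum fun x (_ : x ∈ (Finset.univ : Finset (Fin n → F))) =>
    Finset.sum_le_sum fun σ (_ : σ ∈ (Finset.univ : Finset F)) => h x σ
  simp only [Finset.sum_add_distrib, ← Finset.mul_sum, sum_mu T G] at h2
  have h3 := sum_pairs_le T G hT
  simp only [Finset.sum_const, Finset.card_univ, card_vec, nsmul_eq_mul, mul_one] at h2
  push_cast at h2
  refine le_of_mul_le_mul_left ?_ hP
  refine (h2.trans (add_le_add_left h3 _)).trans_eq ?_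
  ring

end Estimates

/-! ### Failures at one point -/

section Failures

open Module AffineSubspace

set_option linter.unusedSectionVars false

variable {F : Type} [Field F] [Fintype F] {n : ℕ}
variable (T : AffineSubspace F (Fin n → F) → (Fin n → F) → F)
variable (g : (Fin n → F) → F → MvPolynomial (Fin n) F)

/-- The pair `(x, σ)` is excellent and both cubes lie in `ℱ_{x,σ}`. -/
def Fits (d : ℕ) (ε : ℝ) (x : Fin n → F) (σ : F) (C₁ C₂ : AffineSubspace F (Fin n → F)) : Prop :=
  Excellent F n T d ε x σ ∧ C₁ ∈ calF F n T g x σ ∧ C₂ ∈ calF F n T g x σ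

/-- The two entries coincide at `x` but the pair fails to fit the polynomial at `x`. -/
def Fails (d : ℕ) (ε : ℝ) (x : Fin n → F) (C₁ C₂ : AffineSubspace F (Fin n → F)) : Prop :=
  T C₁ x = T C₂ x ∧ ¬ Fits T g d ε x (T C₁ x) C₁ C₂

variable {v w s r b p₂ : ℝ} (G : GrCounts F (Fin n → F) (Fintype.card F : ℝ) v w s r b p₂)
include G

open scoped Classical in
/-- The bound for a fixed `(x, σ)`. A value of small measure contributes little by mixing; a value
of large measure that is not excellent is charged to its disagreeing triples; for an excellent
value one of the cubes lies in the small set `𝒟_{x,σ}`, and mixing applies again. -/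
lemma fails_le {d : ℕ} {ε : ℝ} (hd : 1 ≤ d) (hε : 0 < ε)
    (hbig : 4 ≤ gam d * (ε / 5) * Fintype.card F) (x : Fin n → F) (σ : F)
    (hg : Excellent F n T d ε x σ →
      (1 - 2 * Real.sqrt (gam d)) * ((cubesVal F n T x σ).ncard : ℝ) ≤
        ((calF F n T g x σ).ncard : ℝ)) :
    ((((val T x σ ×ˢ val T x σ).filter fun W =>
        finrank F (W.1 ⊓ W.2 : Submodule F (Fin n → F)) = 2).filter fun W =>
          ¬ Fits T g d ε x σ (mk' x W.1) (mk' x W.2)).card : ℝ)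
      ≤ (planePairs F n).card * ((ε / 5 + 8 / Fintype.card F) * ((val T x σ).card / b)
        + 4 * Real.sqrt (gam d) * ((val T x σ).card / b) ^ 2
        + 4 / (gam d * (v * r ^ 2)) * disag T x σ) := by
  have hq := natCard_pos (F := F)
  have hb := G.b_pos
  have hv := G.v_pos
  have hr := G.r_pos
  have hdR : (1 : ℝ) ≤ d := by exact_mod_cast hd
  have hγ : 0 < gam d := by unfold gam; positivity
  have hγs := Real.sqrt_nonneg (gam d)
  have hP : (0 : ℝ) < (planePairs F n).card := by
    rw [card_planePairs]; exact pairs_total_pos G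
  have hdis := disag_nonneg T x σ
  set X := val T x σ with hX
  have hXs : X ⊆ gr F (Fin n → F) 3 := val_subset T x σ
  set μ : ℝ := X.card / b with hμ
  have hμ0 : 0 ≤ μ := by positivity
  have hXX := mix_upper G hXs hXs le_rfl
  rw [← card_planePairs, ← hμ] at hXX
  have hle : ((((X ×ˢ X).filter fun W =>
        finrank F (W.1 ⊓ W.2 : Submodule F (Fin n → F)) = 2).filter fun W =>
          ¬ Fits T g d ε x σ (mk' x W.1) (mk' x W.2)).card : ℝ) ≤ pairs X X := by
    unfold pairs
    exact_mod_cast Finset.card_le_card (Finset.filter_subset _ _)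
  have h8 : (ε / 5 + 8 / Fintype.card F) * μ
      = ε / 5 * μ + 4 / Fintype.card F * μ + 4 / Fintype.card F * μ := by ring
  have h4 : (0 : ℝ) ≤ 4 / Fintype.card F := by positivity
  have hdt : 0 ≤ 4 / (gam d * (v * r ^ 2)) * disag T x σ := by positivity
  have hst : 0 ≤ 4 * Real.sqrt (gam d) * μ ^ 2 := by positivity
  by_cases hi : ε / 5 ≤ μ
  · by_cases hex : Excellent F n T d ε x σ
    · set D := X.filter fun W => mk' x W ∉ calF F n T g x σ with hD
      have hDX : D ⊆ X := Finset.filter_subset _ _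
      have hDs : (D.card : ℝ) ≤ 2 * Real.sqrt (gam d) * X.card := by
        have h1 := hg hex
        rw [ncard_cubesVal, calF, ncard_sep_cubesVal, ← hX] at h1
        have h1' : (1 - 2 * Real.sqrt (gam d)) * X.card ≤ ((X.filter fun W =>
            ∀ z, z ∈ mk' x W → T (mk' x W) z = eval z (g x σ)).card : ℝ) := by convert h1
        have h2 := Finset.card_filter_add_card_filter_not (s := X)
          (fun W => ∀ z, z ∈ mk' x W → T (mk' x W) z = eval z (g x σ))
        have h3 : D = X.filter fun W => ¬ ∀ z, z ∈ mk' x W → T (mk' x W) z = eval z (g x σ) := by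
          refine Finset.filter_congr fun W hW => ?_
          rw [not_iff_not]
          exact ⟨fun h => h.2, fun h => ⟨(mk'_mem_cubesVal T).2 hW, h⟩⟩
        rw [← h3] at h2
        have h2' := congrArg (Nat.cast (R := ℝ)) h2
        push_cast at h2'
        linarith
      have hDm : pairs D X ≤ (planePairs F n).card *
          (2 * Real.sqrt (gam d) * μ * μ + 4 / Fintype.card F * μ) := by
        have := mix_upper G (hDX.trans hXs) hXs (Finset.card_le_card hDX)
        rw [← card_planePairs, ← hμ] at this
        refine this.trans ?_
        have : (D.card : ℝ) / b ≤ 2 * Real.sqrt (gam d) * μ := by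
          rw [hμ, ← mul_div_assoc]; gcongr
        gcongr
      have hsub : ((((X ×ˢ X).filter fun W =>
          finrank F (W.1 ⊓ W.2 : Submodule F (Fin n → F)) = 2).filter fun W =>
            ¬ Fits T g d ε x σ (mk' x W.1) (mk' x W.2)).card : ℝ) ≤ pairs D X + pairs X D := by
        unfold pairs
        rw [← Nat.cast_add, Nat.cast_le]
        refine le_trans (Finset.card_le_card ?_) (Finset.card_union_le _ _)
        intro W hW
        obtain ⟨hW, hfit⟩ := Finset.mem_filter.1 hW
        unfold Fits at hfit
        simp only [Finset.mem_filter, Finset.mem_product, Finset.mem_union, hD] at hW ⊢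
        tauto
      rw [pairs_comm X D] at hsub
      refine hsub.trans ?_
      calc _ ≤ (planePairs F n).card * (2 * (2 * Real.sqrt (gam d) * μ * μ
            + 4 / Fintype.card F * μ)) := by linarith
        _ ≤ _ := by
          refine mul_le_mul_of_nonneg_left ?_ hP.le
          have : 0 ≤ ε / 5 * μ := by positivity
          have e : 2 * (2 * Real.sqrt (gam d) * μ * μ + 4 / Fintype.card F * μ)
              = 4 * Real.sqrt (gam d) * μ ^ 2
                + (4 / Fintype.card F * μ + 4 / Fintype.card F * μ) := by ring
          rw [h8, e]
          linarith
    · have h1 := disag_lower T G hε hex hi hbig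
      rw [← hX, ← hμ] at h1
      refine (hle.trans hXX).trans (mul_le_mul_of_nonneg_left ?_ hP.le)
      have h2 : μ ^ 2 ≤ 4 / (gam d * (v * r ^ 2)) * disag T x σ := by
        rw [div_mul_eq_mul_div, le_div_iff₀ (by positivity)]
        linarith
      have : 0 ≤ ε / 5 * μ := by positivity
      have : 0 ≤ 4 / Fintype.card F * μ := by positivity
      rw [h8, ← sq]
      linarith
  · refine (hle.trans hXX).trans (mul_le_mul_of_nonneg_left ?_ hP.le)
    have : μ * μ ≤ ε / 5 * μ := mul_le_mul_of_nonneg_right (not_le.1 hi).le hμ0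
    have : 0 ≤ 4 / Fintype.card F * μ := by positivity
    rw [h8]
    linarith

open scoped Classical in
/-- The total number of failures, summed over the base point. -/
lemma sum_fails_le {d : ℕ} (hd : 1 ≤ d) (hT : DegTable F n d T)
    (hε : 10 ^ 7 * (d : ℝ) ^ 6 / (Fintype.card F : ℝ) ≤ epsT F n T)
    (hg : ∀ (x : Fin n → F) (σ : F), Excellent F n T d (epsT F n T) x σ →
      (1 - 2 * Real.sqrt (gam d)) * ((cubesVal F n T x σ).ncard : ℝ) ≤
        ((calF F n T g x σ).ncard : ℝ)) :
    ∑ x : Fin n → F, (((planePairs F n).filter fun W =>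
        Fails T g d (epsT F n T) x (mk' x W.1) (mk' x W.2)).card : ℝ)
      ≤ 3 / 8 * (epsT F n T * ((Fintype.card F : ℝ) ^ n * (planePairs F n).card)) := by
  have hq := natCard_pos (F := F)
  have hb := G.b_pos
  have hv := G.v_pos
  have hr := G.r_pos
  have hdR : (1 : ℝ) ≤ d := by exact_mod_cast hd
  have hd0 : (0 : ℝ) < d := by linarith
  have hγ : 0 < gam d := by unfold gam; positivity
  have hP : (0 : ℝ) < (planePairs F n).card := by
    rw [card_planePairs]; exact pairs_total_pos G
  set ε := epsT F n T with hεdef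
  set q : ℝ := (Fintype.card F : ℝ) with hqdef
  have hε0 : 0 < ε := lt_of_lt_of_le (by positivity) hε
  have hεq : 10 ^ 7 * (d : ℝ) ^ 6 ≤ ε * q := (div_le_iff₀ hq).1 hε
  have hbig : 4 ≤ gam d * (ε / 5) * q := by
    have e : gam d * (ε / 5) * q = ε * q / (5000 * (d : ℝ) ^ 3) := by
      unfold gam; field_simp; norm_num
    rw [e, le_div_iff₀ (by positivity)]
    refine le_trans ?_ hεq
    have h1 : (1 : ℝ) ≤ (d : ℝ) ^ 3 := one_le_pow₀ hdR
    nlinarith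
  have h1 : ∀ x : Fin n → F, (((planePairs F n).filter fun W =>
        Fails T g d ε x (mk' x W.1) (mk' x W.2)).card : ℝ)
      ≤ ∑ σ : F, (planePairs F n).card * ((ε / 5 + 8 / q) * ((val T x σ).card / b)
        + 4 * Real.sqrt (gam d) * ((val T x σ).card / b) ^ 2
        + 4 / (gam d * (v * r ^ 2)) * disag T x σ) := by
    intro x
    have := sum_planePairs_eq T x fun σ W => ¬ Fits T g d ε x σ (mk' x W.1) (mk' x W.2)
    have e : ((planePairs F n).filter fun W => Fails T g d ε x (mk' x W.1) (mk' x W.2)).card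
        = ∑ σ : F, (((val T x σ ×ˢ val T x σ).filter fun W =>
          finrank F (W.1 ⊓ W.2 : Submodule F (Fin n → F)) = 2).filter fun W =>
            ¬ Fits T g d ε x σ (mk' x W.1) (mk' x W.2)).card := by
      refine Eq.trans ?_ (this.trans ?_)
      · exact congrArg _ (Finset.filter_congr fun _ _ => Iff.rfl)
      · rfl
    rw [e, Nat.cast_sum]
    exact Finset.sum_le_sum fun σ _ => fails_le T g G hd hε0 hbig x σ (hg x σ)
  refine (Finset.sum_le_sum fun x _ => h1 x).trans ?_
  simp only [← Finset.mul_sum, Finset.sum_add_distrib, sum_mu T G]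
  have h2 := sum_mu_sq_le T G hT
  have h3 := sum_disag_le T G hT
  rw [← hqdef] at h2 h3
  rw [← hεdef] at h2
  simp only [Finset.sum_const, Finset.card_univ, card_vec, nsmul_eq_mul, mul_one]
  push_cast
  rw [← hqdef]
  have hsq : Real.sqrt (gam d) ≤ 0.0317 := by
    refine Real.sqrt_le_iff.2 ⟨by norm_num, ?_⟩
    have h1 : (1 : ℝ) ≤ (d : ℝ) ^ 3 := one_le_pow₀ hdR
    unfold gam
    rw [div_le_iff₀ (by positivity)]
    nlinarith
  have hs0 := Real.sqrt_nonneg (gam d)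
  calc _ ≤ (planePairs F n).card * (q ^ n * (ε / 5 + 8 / q)
        + 4 * 0.0317 * (q ^ n * (ε + (d + 1) / q))
        + 4 / (gam d * (v * r ^ 2)) * (q ^ n * (d / q) * (v * r ^ 2))) := by
        refine mul_le_mul_of_nonneg_left ?_ hP.le
        refine add_le_add (add_le_add (mul_comm _ _).le ?_) ?_
        · refine mul_le_mul (by linarith) h2 ?_ (by positivity)
          exact Finset.sum_nonneg fun _ _ => Finset.sum_nonneg fun _ _ => by positivity
        · exact mul_le_mul_of_nonneg_left h3 (by positivity)
    _ = q ^ n * (planePairs F n).card * (ε / 5 + 8 / q + 0.1268 * (ε + (d + 1) / q)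
        + 4000 * (d : ℝ) ^ 4 / q) := by
        have : 4 / (gam d * (v * r ^ 2)) * (q ^ n * (d / q) * (v * r ^ 2))
            = q ^ n * (4000 * (d : ℝ) ^ 4 / q) := by
          unfold gam; field_simp; norm_num
        rw [this]; ring
    _ ≤ q ^ n * (planePairs F n).card * (3 / 8 * ε) := by
        refine mul_le_mul_of_nonneg_left ?_ (by positivity)
        have h6 : (d : ℝ) ^ 6 / q ≤ ε / 10 ^ 7 := by
          rw [div_le_div_iff₀ hq (by norm_num)]; linarith
        have p4 : (d : ℝ) ^ 4 ≤ (d : ℝ) ^ 6 := pow_le_pow_right₀ hdR (by norm_num)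
        have p1 : (d : ℝ) ≤ (d : ℝ) ^ 6 := le_self_pow₀ hdR (by norm_num)
        have p0 : (1 : ℝ) ≤ (d : ℝ) ^ 6 := one_le_pow₀ hdR
        have e1 : 8 / q ≤ 8 * ((d : ℝ) ^ 6 / q) := by
          rw [← mul_div_assoc]; gcongr; linarith
        have e2 : (d + 1) / q ≤ 2 * ((d : ℝ) ^ 6 / q) := by
          rw [← mul_div_assoc]; gcongr; linarith
        have e3 : 4000 * (d : ℝ) ^ 4 / q ≤ 4000 * ((d : ℝ) ^ 6 / q) := by
          rw [← mul_div_assoc]; gcongr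
        linarith
    _ = _ := by ring

end Failures

/-! ### Fitting the polynomials at both points -/

/-- Given, for each excellent pair `(x, σ)`, a polynomial `g x σ` of degree
at most `d` agreeing with `T` on at least a `1 − 2√γ` fraction of `𝒞_{x,σ}`, the probability
under `D` that `(C₁, C₂) ∈ S`, both `(x, σ)` and `(y, τ)` are excellent, and
`C₁, C₂ ∈ ℱ_{x,σ} ∩ ℱ_{y,τ}` is at least `ε/4`. -/
theorem pass_fxsigma {F : Type} [Field F] [Fintype F] {n d : ℕ}
    (hn : 6 ≤ n) (hd : 1 ≤ d)
    (hq : (11 * d : ℝ) < (Fintype.card F : ℝ) ^ ((1 : ℝ) / 9))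
    (T : AffineSubspace F (Fin n → F) → (Fin n → F) → F)
    (hT : DegTable F n d T)
    (hε : 10 ^ 7 * (d : ℝ) ^ 6 / (Fintype.card F : ℝ) ≤ epsT F n T)
    (g : (Fin n → F) → F → MvPolynomial (Fin n) F)
    (hg : ∀ (x : Fin n → F) (σ : F), Excellent F n T d (epsT F n T) x σ →
      (g x σ).totalDegree ≤ d ∧
      (1 - 2 * Real.sqrt (gam d)) * ((cubesVal F n T x σ).ncard : ℝ) ≤
        ((calF F n T g x σ).ncard : ℝ)) :
    (epsT F n T / 4) * ((OmegaD F n).ncard : ℝ) ≤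
      ({ω ∈ OmegaD F n | Agrees F n T ω.1.1 ω.1.2 ∧
        Excellent F n T d (epsT F n T) ω.2.1 (T ω.1.1 ω.2.1) ∧
        Excellent F n T d (epsT F n T) ω.2.2 (T ω.1.2 ω.2.2) ∧
        ω.1.1 ∈ calF F n T g ω.2.1 (T ω.1.1 ω.2.1) ∩ calF F n T g ω.2.2 (T ω.1.2 ω.2.2) ∧
        ω.1.2 ∈ calF F n T g ω.2.1 (T ω.1.1 ω.2.1) ∩
          calF F n T g ω.2.2 (T ω.1.2 ω.2.2)}.ncard : ℝ) := by
  classical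
  obtain ⟨v, w, s, r, b, p₂, G⟩ := exists_grCounts (F := F) (V := Fin n → F)
    (by rw [Module.finrank_fin_fun]; omega)
  have hfin : Finite ((AffineSubspace F (Fin n → F) × AffineSubspace F (Fin n → F)) ×
      (Fin n → F) × (Fin n → F)) := by
    have : Finite (AffineSubspace F (Fin n → F)) :=
      Finite.of_injective (fun A : AffineSubspace F (Fin n → F) => (A : Set (Fin n → F)))
        SetLike.coe_injective
    infer_instance
  have hfails := sum_fails_le T g G hd hT hε fun x σ h => (hg x σ h).2
  have hagree := sum_agree T G
  set ε := epsT F n T with hεdef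
  set A := {ω ∈ OmegaD F n | Agrees F n T ω.1.1 ω.1.2} with hA
  set B := {ω ∈ OmegaD F n | Fails T g d ε ω.2.1 ω.1.1 ω.1.2} with hB
  set B' := {ω ∈ OmegaD F n | Fails T g d ε ω.2.2 ω.1.1 ω.1.2} with hB'
  set H := {ω ∈ OmegaD F n | Agrees F n T ω.1.1 ω.1.2 ∧
        Excellent F n T d ε ω.2.1 (T ω.1.1 ω.2.1) ∧
        Excellent F n T d ε ω.2.2 (T ω.1.2 ω.2.2) ∧
        ω.1.1 ∈ calF F n T g ω.2.1 (T ω.1.1 ω.2.1) ∩ calF F n T g ω.2.2 (T ω.1.2 ω.2.2) ∧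
        ω.1.2 ∈ calF F n T g ω.2.1 (T ω.1.1 ω.2.1) ∩
          calF F n T g ω.2.2 (T ω.1.2 ω.2.2)} with hH
  have hsub : A ⊆ H ∪ B ∪ B' := by
    rintro ω ⟨hω, hag⟩
    by_cases h1 : Fails T g d ε ω.2.1 ω.1.1 ω.1.2
    · exact Or.inl (Or.inr ⟨hω, h1⟩)
    by_cases h2 : Fails T g d ε ω.2.2 ω.1.1 ω.1.2
    · exact Or.inr ⟨hω, h2⟩
    have ex := hag ω.2.1 hω.2.1 hω.2.2.1
    have ey := hag ω.2.2 hω.2.2.2.1 hω.2.2.2.2.1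
    obtain ⟨a1, a2, a3⟩ := not_not.1 fun h => h1 ⟨ex, h⟩
    obtain ⟨b1, b2, b3⟩ := not_not.1 fun h => h2 ⟨ey, h⟩
    rw [ey] at b1 b2 b3
    exact Or.inl (Or.inl ⟨hω, hag, a1, b1, ⟨a2, b2⟩, ⟨a3, b3⟩⟩)
  -- exchanging `x` and `y` preserves the sample space
  have hswap : B' = (fun ω => (ω.1, ω.2.swap)) '' B := by
    ext ⟨C, x, y⟩
    constructor
    · rintro ⟨⟨h1, h2, h3, h4, h5, h6⟩, h⟩
      exact ⟨(C, y, x), ⟨⟨h1, h4, h5, h2, h3, h6.symm⟩, h⟩, rfl⟩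
    · rintro ⟨⟨C', x', y'⟩, ⟨⟨h1, h2, h3, h4, h5, h6⟩, h⟩, e⟩
      simp only [Prod.swap, Prod.mk.injEq] at e
      obtain ⟨rfl, rfl, rfl⟩ := e
      exact ⟨⟨h1, h4, h5, h2, h3, h6.symm⟩, h⟩
  have hcard : A.ncard ≤ H.ncard + B.ncard + B.ncard := by
    have hB'c : B'.ncard ≤ B.ncard := by
      rw [hswap]; exact Set.ncard_image_le (Set.toFinite _)
    refine (Set.ncard_le_ncard hsub (Set.toFinite _)).trans ((Set.ncard_union_le _ _).trans ?_)
    exact add_le_add (Set.ncard_union_le _ _) hB'c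
  have cA : A.ncard = _ := ncard_omega fun _ C₁ C₂ => Agrees F n T C₁ C₂
  have cB : B.ncard = _ := ncard_omega (Fails T g d ε)
  have cΩ := ncard_omega (F := F) (n := n) fun _ _ _ => True
  have cA' := congrArg (Nat.cast (R := ℝ)) cA
  have cB' := congrArg (Nat.cast (R := ℝ)) cB
  have cΩ' := congrArg (Nat.cast (R := ℝ)) cΩ
  have eΩ : {ω ∈ OmegaD F n | True} = OmegaD F n := by ext; simp
  simp only [eΩ, Finset.filter_true, Finset.sum_const, Finset.card_univ, card_vec, smul_eq_mul,
    Nat.cast_mul, Nat.cast_pow] at cΩ'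
  rw [Nat.cast_mul, Nat.cast_sum] at cA' cB'
  rw [hagree] at cA'
  have hK : (0 : ℝ) ≤ ((Fintype.card F ^ 2 - 1 : ℕ) : ℝ) := Nat.cast_nonneg _
  have hB2 := mul_le_mul_of_nonneg_left hfails hK
  rw [← cB'] at hB2
  have hcard' : (A.ncard : ℝ) ≤ H.ncard + B.ncard + B.ncard := by exact_mod_cast hcard
  rw [cΩ']
  linarith
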